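/- arXiv:math/0508421 — 4 statements merged into one kernel-verified Lean document; each statement's English description precedes it below -/
import Mathlib

section
/- For every integer d > 0 divisible by 48, every SL₂(ℂ)-invariant homogeneous polynomial of degree d in the coefficients a₀,…,a₅ of the binary quintic F can be written as a polynomial with complex coefficients in the six invariants B₀(F),…,B₅(F). -/
/-!
The proof goes through the classical invariants `J`, `K`, `L` of the quintic, of degrees
`4`, `8`, `12` (`fJ`, `fK`, `fL`, up to constants).

*Invariants of degree divisible by `4` are polynomials in `J`, `K`, `L`* (`inv_eq_JKL`). A general
quintic is a sum of three fifth powers (`exists_pw`: the linear forms are read off from the roots of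
the canonizant), hence equivalent to a Sylvester form `u x₁⁵ + v x₂⁵ - w (x₁ + x₂)⁵`. The linear
substitutions permuting the three linear forms show that an invariant of degree divisible by `4`
is symmetric in `u, v, w`, hence an isobaric polynomial in the elementary symmetric functions
`e₁, e₂, e₃`. As `J = e₂² - 4 e₁ e₃`, `K = e₃² e₂`, `L = e₃⁴`, it becomes a polynomial in `J, K, L`
after multiplication by a power of `L` (`LP_pow_mul`); this power can be cancelled because `J`
and `K` are algebraically independent on the hypersurface `L = 0` (`LP_cancel`).

*The `Bᵢ` in terms of `J`, `K`, `L`* (`eid_eq_zero`, `Binv_eq`). In terms of the brackets of the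
roots, `12 S(Qᵢ) = pᵢ` and `256 (S(Qᵢ)³ - 27 T(Qᵢ)²) = dᵢ`, so up to nonzero constants the `Bᵢ`
are the coefficients of `∏ᵢ (dᵢ + pᵢ³ z)`. Explicit polynomials of weight `6` in `J, K, L` (with
weights `1, 2, 3`) are given for them. Both sides behave alike under `SL₂` and under scaling of the
roots, so that it suffices to treat the roots `∞, 0, r, s, t`, where the identity is verified in the
elementary symmetric functions of `r, s, t`; the general case follows by density.

*The algebra generated by the `Bᵢ`* (`mon_mem`). There are seven monomials of weight `6` in
`J, K, L`, and the `Bᵢ` span a hyperplane in the space generated by them. The products of two of the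
`Bᵢ` nevertheless span all monomials of weight `12`, and every monomial of weight `12 n` is a
product of `n` monomials of weight `12`. Weight `12 n` corresponds to degree `48 n` in the
coefficients.
-/

noncomputable section

open MvPolynomial

abbrev P2 := MvPolynomial (Fin 2) ℂ

/-- The bracket `(bc) = b₁c₂ − b₂c₁` of two points of `ℂ²`. -/
def br (b c : Fin 2 → ℂ) : ℂ := b 0 * c 1 - b 1 * c 0

/-- The linear binary form `(xλ) = x₁λ₂ − x₂λ₁` with homogeneous root `λ`. -/
def lin (l : Fin 2 → ℂ) : P2 := C (l 1) * X 0 - C (l 0) * X 1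

/-- The binary quintic with homogeneous roots `λ₁,…,λ₅`. -/
def quinticOf (l : Fin 5 → Fin 2 → ℂ) : P2 := ∏ i, lin (l i)

/-- The binary quartic obtained from the quintic with roots `λ₁,…,λ₅` by
omitting the `i`-th factor. -/
def quarticOmit (l : Fin 5 → Fin 2 → ℂ) (i : Fin 5) : P2 :=
  ∏ j ∈ Finset.univ.erase i, lin (l j)

/-- The binary quartic with homogeneous roots `ξ₁,…,ξ₄`. -/
def quarticOf (l : Fin 4 → Fin 2 → ℂ) : P2 := ∏ i, lin (l i)

/-- The coefficient of `x₁^i x₂^j` in a binary form. -/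
def mcoeff (i j : ℕ) (F : P2) : ℂ :=
  MvPolynomial.coeff (Finsupp.single 0 i + Finsupp.single 1 j) F

/-- The invariant `S = q₀q₄ − 4q₁q₃ + 3q₂²` of a binary quartic
`Q = q₀x₁⁴ + 4q₁x₁³x₂ + 6q₂x₁²x₂² + 4q₃x₁x₂³ + q₄x₂⁴`. -/
def Sq (Q : P2) : ℂ :=
  mcoeff 4 0 Q * mcoeff 0 4 Q - 4 * (mcoeff 3 1 Q / 4) * (mcoeff 1 3 Q / 4)
    + 3 * (mcoeff 2 2 Q / 6) ^ 2

/-- The invariant `T = q₀q₂q₄ + 2q₁q₂q₃ − q₂³ − q₀q₃² − q₁²q₄` of a binary quartic. -/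
def Tq (Q : P2) : ℂ :=
  mcoeff 4 0 Q * (mcoeff 2 2 Q / 6) * mcoeff 0 4 Q
    + 2 * (mcoeff 3 1 Q / 4) * (mcoeff 2 2 Q / 6) * (mcoeff 1 3 Q / 4)
    - (mcoeff 2 2 Q / 6) ^ 3 - mcoeff 4 0 Q * (mcoeff 1 3 Q / 4) ^ 2
    - (mcoeff 3 1 Q / 4) ^ 2 * mcoeff 0 4 Q

/-- The quintic `R̄ = ∏ᵢ ((S(Qᵢ)³ − 27T(Qᵢ)²)z − S(Qᵢ)³)` in the variable `z`. -/
def Rbar (l : Fin 5 → Fin 2 → ℂ) : Polynomial ℂ :=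
  ∏ i : Fin 5,
    (Polynomial.C (Sq (quarticOmit l i) ^ 3 - 27 * Tq (quarticOmit l i) ^ 2) * Polynomial.X
      - Polynomial.C (Sq (quarticOmit l i) ^ 3))

/-- The invariant `Bᵢ`, defined by `R̄ = Σᵢ Bᵢ z^(5−i)`. -/
def Binv (l : Fin 5 → Fin 2 → ℂ) (i : ℕ) : ℂ := (Rbar l).coeff (5 - i)

/-- Partial derivative of a binary form. -/
def pd (i : Fin 2) (F : P2) : P2 := MvPolynomial.pderiv i F

/-- The `k`-th transvectant of binary forms `F`, `G` of orders `p`, `q`. -/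
def transv (p q k : ℕ) (F G : P2) : P2 :=
  C ((Nat.factorial (p - k) * Nat.factorial (q - k) : ℂ)
      / (Nat.factorial p * Nat.factorial q)) *
  ∑ i ∈ Finset.range (k + 1),
    C ((-1 : ℂ) ^ i * (Nat.choose k i : ℂ)) *
      ((pd 1)^[i] ((pd 0)^[k - i] F)) * ((pd 0)^[i] ((pd 1)^[k - i] G))

/-- The covariant `C₁ = (F,F)₄` of a binary quintic. -/
def cov1 (F : P2) : P2 := transv 5 5 4 F F
/-- The covariant `C₂ = (F,C₁)₂` of a binary quintic. -/
def cov2 (F : P2) : P2 := transv 5 2 2 F (cov1 F)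
/-- The covariant `C₃ = (C₂,C₂)₂` of a binary quintic. -/
def cov3 (F : P2) : P2 := transv 3 3 2 (cov2 F) (cov2 F)
/-- The covariant `C₄ = (C₂,C₁)₂` of a binary quintic. -/
def cov4 (F : P2) : P2 := transv 3 2 2 (cov2 F) (cov1 F)

/-- The degree `4` invariant `J = −½(C₁,C₁)₂` of a binary quintic. -/
def Jinv (F : P2) : ℂ := -(1/2) * constantCoeff (transv 2 2 2 (cov1 F) (cov1 F))
/-- The degree `8` invariant `K = ⅛(C₁,C₃)₂` of a binary quintic. -/
def Kinv (F : P2) : ℂ := (1/8) * constantCoeff (transv 2 2 2 (cov1 F) (cov3 F))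
/-- The degree `12` invariant `L = (1/96)(C₃,C₃)₂` of a binary quintic. -/
def Linv (F : P2) : ℂ := (1/96) * constantCoeff (transv 2 2 2 (cov3 F) (cov3 F))
/-- The degree `18` invariant `H = −(1/384)((C₄,C₃)₁,(C₁,C₄)₁)₁` of a binary quintic. -/
def Hinv (F : P2) : ℂ :=
  -(1/384) *
    constantCoeff (transv 1 1 1 (transv 1 2 1 (cov4 F) (cov3 F)) (transv 2 1 1 (cov1 F) (cov4 F)))

/-- The coefficients `a₀,…,a₅` of a binary quintic `F = Σ aᵢ x₁^(5−i) x₂^i`. -/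
def qcoeffs (F : P2) : Fin 6 → ℂ := fun i => mcoeff (5 - (i : ℕ)) (i : ℕ) F

/-- The binary quintic with coefficients `a₀,…,a₅`. -/
def formOf (a : Fin 6 → ℂ) : P2 := ∑ i : Fin 6, C (a i) * X 0 ^ (5 - (i : ℕ)) * X 1 ^ (i : ℕ)

/-- The `GL₂(ℂ)` action on binary forms, `(gF)(x) = F(g⁻¹x)`. -/
def act (g : Matrix.GeneralLinearGroup (Fin 2) ℂ) (F : P2) : P2 :=
  aeval (fun i => ∑ j,
    C (((g⁻¹ : Matrix.GeneralLinearGroup (Fin 2) ℂ) : Matrix (Fin 2) (Fin 2) ℂ) i j) * X j) F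

/-- The `SL₂(ℂ)` action on binary forms, `(gF)(x) = F(g⁻¹x)`. -/
def actSL (g : Matrix.SpecialLinearGroup (Fin 2) ℂ) (F : P2) : P2 :=
  aeval (fun i => ∑ j,
    C (((g⁻¹ : Matrix.SpecialLinearGroup (Fin 2) ℂ) : Matrix (Fin 2) (Fin 2) ℂ) i j) * X j) F

/-- `P` (a polynomial in the coefficients `a₀,…,a₅` of a binary quintic) is an
`SL₂(ℂ)`-invariant: `P(gF) = P(F)` for all `g ∈ SL₂(ℂ)`. -/
def IsInvariantPoly (P : MvPolynomial (Fin 6) ℂ) : Prop :=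
  ∀ (g : Matrix.SpecialLinearGroup (Fin 2) ℂ) (a : Fin 6 → ℂ),
    MvPolynomial.eval (qcoeffs (actSL g (formOf a))) P = MvPolynomial.eval a P

/-- The discriminant `∏_{i<j} (λᵢλⱼ)²` of a binary quintic with roots `λ₁,…,λ₅`. -/
def disc5 (l : Fin 5 → Fin 2 → ℂ) : ℂ := ∏ i, ∏ j ∈ Finset.Ioi i, br (l i) (l j) ^ 2

/-- The discriminant `∏_{i<j} (ξᵢξⱼ)²` of a binary quartic with roots `ξ₁,…,ξ₄`. -/
def disc4 (l : Fin 4 → Fin 2 → ℂ) : ℂ := ∏ i, ∏ j ∈ Finset.Ioi i, br (l i) (l j) ^ 2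

/-- The Sylvester canonical form `u x₁⁵ + v x₂⁵ − w (x₁+x₂)⁵`. -/
def sylvester (u v w : ℂ) : P2 := C u * X 0 ^ 5 + C v * X 1 ^ 5 - C w * (X 0 + X 1) ^ 5

/-- The submodule of `SL₂(ℂ)`-invariant polynomials in the coefficients of the
binary quintic. -/
def invariantSubmodule : Submodule ℂ (MvPolynomial (Fin 6) ℂ) :=
  ⨅ (g : Matrix.SpecialLinearGroup (Fin 2) ℂ), ⨅ (a : Fin 6 → ℂ),
    LinearMap.ker
      ((aeval (R := ℂ) (qcoeffs (actSL g (formOf a)))).toLinearMap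
        - (aeval (R := ℂ) a).toLinearMap)

/-! ### Coefficients and roots -/

theorem mcoeff_mon (i j m n : ℕ) (c : ℂ) :
    mcoeff i j (C c * X 0 ^ m * X 1 ^ n) = if m = i ∧ n = j then c else 0 := by
  have h : (C c * X 0 ^ m * X 1 ^ n : P2)
      = monomial (Finsupp.single 0 m + Finsupp.single 1 n) c := by
    rw [X_pow_eq_monomial, X_pow_eq_monomial, C_mul_monomial, monomial_mul]
    simp
  rw [h, mcoeff, coeff_monomial]
  congr 1
  simp [Finsupp.ext_iff, Fin.forall_fin_two]

theorem qcoeffs_formOf (a : Fin 6 → ℂ) : qcoeffs (formOf a) = a := by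
  funext k
  have hadd : ∀ i j (F G : P2), mcoeff i j (F + G) = mcoeff i j F + mcoeff i j G :=
    fun i j F G => coeff_add _ _ _
  fin_cases k <;> simp only [qcoeffs, formOf, Fin.sum_univ_six, hadd, mcoeff_mon] <;> simp

/-- The coefficients of the quintic with homogeneous roots `l`, as signed elementary
multisymmetric functions of the roots. -/
def rootCoeffs {R : Type*} [CommRing R] (l : Fin 5 → Fin 2 → R) : Fin 6 → R :=
  ![l 0 1 * l 1 1 * l 2 1 * l 3 1 * l 4 1,
    -(l 0 0 * l 1 1 * l 2 1 * l 3 1 * l 4 1 + l 0 1 * l 1 0 * l 2 1 * l 3 1 * l 4 1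
      + l 0 1 * l 1 1 * l 2 0 * l 3 1 * l 4 1 + l 0 1 * l 1 1 * l 2 1 * l 3 0 * l 4 1
      + l 0 1 * l 1 1 * l 2 1 * l 3 1 * l 4 0),
    l 0 0 * l 1 0 * l 2 1 * l 3 1 * l 4 1 + l 0 0 * l 1 1 * l 2 0 * l 3 1 * l 4 1
      + l 0 0 * l 1 1 * l 2 1 * l 3 0 * l 4 1 + l 0 0 * l 1 1 * l 2 1 * l 3 1 * l 4 0
      + l 0 1 * l 1 0 * l 2 0 * l 3 1 * l 4 1 + l 0 1 * l 1 0 * l 2 1 * l 3 0 * l 4 1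
      + l 0 1 * l 1 0 * l 2 1 * l 3 1 * l 4 0 + l 0 1 * l 1 1 * l 2 0 * l 3 0 * l 4 1
      + l 0 1 * l 1 1 * l 2 0 * l 3 1 * l 4 0 + l 0 1 * l 1 1 * l 2 1 * l 3 0 * l 4 0,
    -(l 0 1 * l 1 1 * l 2 0 * l 3 0 * l 4 0 + l 0 1 * l 1 0 * l 2 1 * l 3 0 * l 4 0
      + l 0 1 * l 1 0 * l 2 0 * l 3 1 * l 4 0 + l 0 1 * l 1 0 * l 2 0 * l 3 0 * l 4 1
      + l 0 0 * l 1 1 * l 2 1 * l 3 0 * l 4 0 + l 0 0 * l 1 1 * l 2 0 * l 3 1 * l 4 0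
      + l 0 0 * l 1 1 * l 2 0 * l 3 0 * l 4 1 + l 0 0 * l 1 0 * l 2 1 * l 3 1 * l 4 0
      + l 0 0 * l 1 0 * l 2 1 * l 3 0 * l 4 1 + l 0 0 * l 1 0 * l 2 0 * l 3 1 * l 4 1),
    l 0 1 * l 1 0 * l 2 0 * l 3 0 * l 4 0 + l 0 0 * l 1 1 * l 2 0 * l 3 0 * l 4 0
      + l 0 0 * l 1 0 * l 2 1 * l 3 0 * l 4 0 + l 0 0 * l 1 0 * l 2 0 * l 3 1 * l 4 0
      + l 0 0 * l 1 0 * l 2 0 * l 3 0 * l 4 1,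
    -(l 0 0 * l 1 0 * l 2 0 * l 3 0 * l 4 0)]

theorem quinticOf_eq_formOf (l : Fin 5 → Fin 2 → ℂ) : quinticOf l = formOf (rootCoeffs l) := by
  simp only [quinticOf, formOf, lin, rootCoeffs, Fin.prod_univ_five, Fin.sum_univ_six]
  simp
  ring

theorem qcoeffs_quinticOf (l : Fin 5 → Fin 2 → ℂ) : qcoeffs (quinticOf l) = rootCoeffs l := by
  rw [quinticOf_eq_formOf, qcoeffs_formOf]

/-! ### The canonizant and the invariants `J`, `K`, `L` -/

section covariants
variable {R : Type*} [CommRing R]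

/-- The coefficients `c₀,…,c₃` of the canonizant: the signed maximal minors of the Hankel matrix
`(A_{i+j})`, `i ≤ 2`, `j ≤ 3`. -/
def hk0 (A : Fin 6 → R) : R :=
  A 1 * (A 3 * A 5 - A 4 * A 4) - A 2 * (A 2 * A 5 - A 4 * A 3) + A 3 * (A 2 * A 4 - A 3 * A 3)
/-- See `hk0`. -/
def hk1 (A : Fin 6 → R) : R :=
  -(A 0 * (A 3 * A 5 - A 4 * A 4) - A 2 * (A 1 * A 5 - A 4 * A 2) + A 3 * (A 1 * A 4 - A 3 * A 2))
/-- See `hk0`. -/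
def hk2 (A : Fin 6 → R) : R :=
  A 0 * (A 2 * A 5 - A 4 * A 3) - A 1 * (A 1 * A 5 - A 4 * A 2) + A 3 * (A 1 * A 3 - A 2 * A 2)
/-- See `hk0`. -/
def hk3 (A : Fin 6 → R) : R :=
  -(A 0 * (A 2 * A 4 - A 3 * A 3) - A 1 * (A 1 * A 4 - A 3 * A 2) + A 2 * (A 1 * A 3 - A 2 * A 2))

/-- The coefficients of the quadratic covariant of degree `2`. -/
def qi0 (A : Fin 6 → R) : R := A 0 * A 4 - 4 * A 1 * A 3 + 3 * A 2 ^ 2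
/-- See `qi0`. -/
def qi1 (A : Fin 6 → R) : R := A 0 * A 5 - 3 * A 1 * A 4 + 2 * A 2 * A 3
/-- See `qi0`. -/
def qi2 (A : Fin 6 → R) : R := A 1 * A 5 - 4 * A 2 * A 4 + 3 * A 3 ^ 2

/-- The invariant of degree `4`, in the normalised coefficients `Aₖ = aₖ / (5 choose k)`. -/
def fJ (A : Fin 6 → R) : R := qi1 A ^ 2 - 4 * qi0 A * qi2 A
/-- The invariant of degree `8`: the pairing of the quadratic covariant with the Hessian of the
canonizant. -/
def fK (A : Fin 6 → R) : R :=
  -(2 * qi0 A * (hk1 A ^ 2 - 3 * hk0 A * hk2 A) + qi1 A * (hk1 A * hk2 A - 9 * hk0 A * hk3 A)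
    + 2 * qi2 A * (hk2 A ^ 2 - 3 * hk3 A * hk1 A))
/-- The invariant of degree `12`: the discriminant of the canonizant. -/
def fL (A : Fin 6 → R) : R :=
  hk2 A ^ 2 * hk1 A ^ 2 - 4 * hk3 A * hk1 A ^ 3 - 4 * hk2 A ^ 3 * hk0 A
    - 27 * hk3 A ^ 2 * hk0 A ^ 2 + 18 * hk3 A * hk2 A * hk1 A * hk0 A

/-- The normalised coefficients of `∑ᵢ (αᵢ x₁ + βᵢ x₂)⁵`, a sum of three fifth powers. -/
def pw (α β : Fin 3 → R) : Fin 6 → R := fun k => ∑ i, α i ^ (5 - (k : ℕ)) * β i ^ (k : ℕ)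

/-- The bracket of the `i`-th and `j`-th linear form. -/
def bk (α β : Fin 3 → R) (i j : Fin 3) : R := α i * β j - α j * β i

variable (α β : Fin 3 → R)

theorem qi_pw :
    qi0 (pw α β) = bk α β 0 1 ^ 4 * (α 0 * α 1) + bk α β 1 2 ^ 4 * (α 1 * α 2)
      + bk α β 2 0 ^ 4 * (α 2 * α 0) ∧
    qi1 (pw α β) = bk α β 0 1 ^ 4 * (α 0 * β 1 + α 1 * β 0)
      + bk α β 1 2 ^ 4 * (α 1 * β 2 + α 2 * β 1) + bk α β 2 0 ^ 4 * (α 2 * β 0 + α 0 * β 2) ∧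
    qi2 (pw α β) = bk α β 0 1 ^ 4 * (β 0 * β 1) + bk α β 1 2 ^ 4 * (β 1 * β 2)
      + bk α β 2 0 ^ 4 * (β 2 * β 0) := by
  refine ⟨?_, ?_, ?_⟩ <;>
  · simp only [qi0, qi1, qi2, pw, bk, Fin.sum_univ_three]
    simp
    ring

theorem hk_pw :
    hk0 (pw α β) = (bk α β 0 1 * bk α β 1 2 * bk α β 2 0) ^ 2 * (β 0 * β 1 * β 2) ∧
    hk1 (pw α β) = -((bk α β 0 1 * bk α β 1 2 * bk α β 2 0) ^ 2
      * (α 0 * β 1 * β 2 + β 0 * α 1 * β 2 + β 0 * β 1 * α 2)) ∧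
    hk2 (pw α β) = (bk α β 0 1 * bk α β 1 2 * bk α β 2 0) ^ 2
      * (β 0 * α 1 * α 2 + α 0 * β 1 * α 2 + α 0 * α 1 * β 2) ∧
    hk3 (pw α β) = -((bk α β 0 1 * bk α β 1 2 * bk α β 2 0) ^ 2 * (α 0 * α 1 * α 2)) := by
  refine ⟨?_, ?_, ?_, ?_⟩ <;>
  · simp only [hk0, hk1, hk2, hk3, pw, bk, Fin.sum_univ_three]
    simp
    ring

theorem fJ_pw : fJ (pw α β) = (bk α β 0 1 ^ 5) ^ 2 + (bk α β 1 2 ^ 5) ^ 2 + (bk α β 2 0 ^ 5) ^ 2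
    - 2 * (bk α β 0 1 ^ 5 * bk α β 1 2 ^ 5 + bk α β 1 2 ^ 5 * bk α β 2 0 ^ 5
      + bk α β 2 0 ^ 5 * bk α β 0 1 ^ 5) := by
  obtain ⟨h0, h1, h2⟩ := qi_pw α β
  rw [fJ, h0, h1, h2]
  simp only [bk]
  ring

theorem fK_pw : fK (pw α β) = bk α β 0 1 ^ 5 * bk α β 1 2 ^ 5 * bk α β 2 0 ^ 5
    * (bk α β 0 1 ^ 5 + bk α β 1 2 ^ 5 + bk α β 2 0 ^ 5) := by
  obtain ⟨h0, h1, h2⟩ := qi_pw α β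
  obtain ⟨k0, k1, k2, k3⟩ := hk_pw α β
  rw [fK, h0, h1, h2, k0, k1, k2, k3]
  have e : ∀ a b c : R, a ^ 5 * b ^ 5 * c ^ 5 = (a * b * c) ^ 4 * (a * b * c) :=
    fun a b c => by ring
  rw [e]
  generalize hD : (bk α β 0 1 * bk α β 1 2 * bk α β 2 0) = D
  have : D = (bk α β 0 1 * bk α β 1 2 * bk α β 2 0) := hD.symm
  clear hD
  suffices h : -(2 * (bk α β 0 1 ^ 4 * (α 0 * α 1) + bk α β 1 2 ^ 4 * (α 1 * α 2)
      + bk α β 2 0 ^ 4 * (α 2 * α 0)) * ((α 0 * β 1 * β 2 + β 0 * α 1 * β 2 + β 0 * β 1 * α 2) ^ 2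
        - 3 * (β 0 * β 1 * β 2) * (β 0 * α 1 * α 2 + α 0 * β 1 * α 2 + α 0 * α 1 * β 2))
      + (bk α β 0 1 ^ 4 * (α 0 * β 1 + α 1 * β 0)
      + bk α β 1 2 ^ 4 * (α 1 * β 2 + α 2 * β 1) + bk α β 2 0 ^ 4 * (α 2 * β 0 + α 0 * β 2))
      * (-(α 0 * β 1 * β 2 + β 0 * α 1 * β 2 + β 0 * β 1 * α 2) *
       (β 0 * α 1 * α 2 + α 0 * β 1 * α 2 + α 0 * α 1 * β 2)
        + 9 * (β 0 * β 1 * β 2) * (α 0 * α 1 * α 2)) + 2 * (bk α β 0 1 ^ 4 * (β 0 * β 1)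
        + bk α β 1 2 ^ 4 * (β 1 * β 2) + bk α β 2 0 ^ 4 * (β 2 * β 0)) *
        ((β 0 * α 1 * α 2 + α 0 * β 1 * α 2 + α 0 * α 1 * β 2) ^ 2 - 3 * (α 0 * α 1 * α 2) *
        (α 0 * β 1 * β 2 + β 0 * α 1 * β 2 + β 0 * β 1 * α 2)))
      = (bk α β 0 1 * bk α β 1 2 * bk α β 2 0) *
        (bk α β 0 1 ^ 5 + bk α β 1 2 ^ 5 + bk α β 2 0 ^ 5) by
    rw [← this] at h
    linear_combination D ^ 4 * h
  simp only [bk]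
  ring

theorem fL_pw : fL (pw α β) = (bk α β 0 1 ^ 5 * bk α β 1 2 ^ 5 * bk α β 2 0 ^ 5) ^ 2 := by
  obtain ⟨k0, k1, k2, k3⟩ := hk_pw α β
  rw [fL, k0, k1, k2, k3]
  have e : ∀ a b c : R, (a ^ 5 * b ^ 5 * c ^ 5) ^ 2 = (a * b * c) ^ 8 * (a * b * c) ^ 2 :=
    fun a b c => by ring
  rw [e]
  -- the discriminant of `(α₀ - β₀ t)(α₁ - β₁ t)(α₂ - β₂ t)`, up to signs
  have h : ∀ x y z t : R, x = β 0 * β 1 * β 2 →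
      y = α 0 * β 1 * β 2 + β 0 * α 1 * β 2 + β 0 * β 1 * α 2 →
      z = β 0 * α 1 * α 2 + α 0 * β 1 * α 2 + α 0 * α 1 * β 2 → t = α 0 * α 1 * α 2 →
      z ^ 2 * y ^ 2 - 4 * t * y ^ 3 - 4 * z ^ 3 * x - 27 * t ^ 2 * x ^ 2 + 18 * t * z * y * x
        = (bk α β 0 1 * bk α β 1 2 * bk α β 2 0) ^ 2 := by
    rintro _ _ _ _ rfl rfl rfl rfl
    simp only [bk]
    ring
  generalize hD : bk α β 0 1 * bk α β 1 2 * bk α β 2 0 = D at *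
  linear_combination D ^ 8 * h _ _ _ _ rfl rfl rfl rfl
end covariants

/-- The recurrence satisfied by the coefficients: the canonizant is apolar to the quintic. -/
theorem hk_rec {R : Type*} [CommRing R] (A : Fin 6 → R) :
    hk0 A * A 0 + hk1 A * A 1 + hk2 A * A 2 + hk3 A * A 3 = 0 ∧
    hk0 A * A 1 + hk1 A * A 2 + hk2 A * A 3 + hk3 A * A 4 = 0 ∧
    hk0 A * A 2 + hk1 A * A 3 + hk2 A * A 4 + hk3 A * A 5 = 0 := by
  simp only [hk0, hk1, hk2, hk3]
  refine ⟨?_, ?_, ?_⟩ <;> ring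

/-- Sylvester's theorem: a quintic whose canonizant has degree `3` and nonzero discriminant is a
sum of three fifth powers. -/
theorem exists_pw (A : Fin 6 → ℂ) (h3 : hk3 A ≠ 0) (hL : fL A ≠ 0) :
    ∃ α β : Fin 3 → ℂ, A = pw α β := by
  set P : Cubic ℂ := ⟨hk3 A, hk2 A, hk1 A, hk0 A⟩ with hP
  have ha : P.a ≠ 0 := h3
  obtain ⟨x, y, z, hr⟩ := (Cubic.splits_iff_roots_eq_three (φ := RingHom.id ℂ) ha).1
    (IsAlgClosed.splits _)
  have hd : P.discr ≠ 0 := by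
    rw [Cubic.discr]
    exact hL
  obtain ⟨hxy, hxz, hyz⟩ := (Cubic.discr_ne_zero_iff_roots_ne ha hr).1 hd
  have hb := Cubic.b_eq_three_roots ha hr
  have hc := Cubic.c_eq_three_roots ha hr
  have he := Cubic.d_eq_three_roots ha hr
  simp only [hP, RingHom.id_apply] at hb hc he
  obtain ⟨r0, r1, r2⟩ := hk_rec A
  rw [hb, hc, he] at r0 r1 r2
  have hA3 : A 3 = (x + y + z) * A 2 - (x * y + x * z + y * z) * A 1 + x * y * z * A 0 := by
    apply mul_left_cancel₀ h3
    linear_combination r0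
  have hA4 : A 4 = (x + y + z) * A 3 - (x * y + x * z + y * z) * A 2 + x * y * z * A 1 := by
    apply mul_left_cancel₀ h3
    linear_combination r1
  have hA5 : A 5 = (x + y + z) * A 4 - (x * y + x * z + y * z) * A 3 + x * y * z * A 2 := by
    apply mul_left_cancel₀ h3
    linear_combination r2
  have dxy := sub_ne_zero.2 hxy
  have dxz := sub_ne_zero.2 hxz
  have dyz := sub_ne_zero.2 hyz
  -- the weights, by Lagrange interpolation, and their fifth roots
  obtain ⟨p, hp⟩ := IsAlgClosed.exists_pow_nat_eq
    ((A 2 - (y + z) * A 1 + y * z * A 0) / ((x - y) * (x - z))) (n := 5) (by norm_num)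
  obtain ⟨q, hq⟩ := IsAlgClosed.exists_pow_nat_eq
    (-(A 2 - (x + z) * A 1 + x * z * A 0) / ((x - y) * (y - z))) (n := 5) (by norm_num)
  obtain ⟨r, hr⟩ := IsAlgClosed.exists_pow_nat_eq
    ((A 2 - (x + y) * A 1 + x * y * A 0) / ((x - z) * (y - z))) (n := 5) (by norm_num)
  have hA0 : A 0 = p ^ 5 + q ^ 5 + r ^ 5 := by
    rw [hp, hq, hr]; field_simp; ring
  have hA1 : A 1 = p ^ 5 * x + q ^ 5 * y + r ^ 5 * z := by
    rw [hp, hq, hr]; field_simp; ring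
  have hA2 : A 2 = p ^ 5 * x ^ 2 + q ^ 5 * y ^ 2 + r ^ 5 * z ^ 2 := by
    rw [hp, hq, hr]; field_simp; ring
  have hA3' : A 3 = p ^ 5 * x ^ 3 + q ^ 5 * y ^ 3 + r ^ 5 * z ^ 3 := by
    rw [hA3, hA0, hA1, hA2]; ring
  have hA4' : A 4 = p ^ 5 * x ^ 4 + q ^ 5 * y ^ 4 + r ^ 5 * z ^ 4 := by
    rw [hA4, hA3', hA1, hA2]; ring
  have hA5' : A 5 = p ^ 5 * x ^ 5 + q ^ 5 * y ^ 5 + r ^ 5 * z ^ 5 := by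
    rw [hA5, hA4', hA3', hA2]; ring
  refine ⟨![p, q, r], ![p * x, q * y, r * z], ?_⟩
  funext k
  fin_cases k <;> simp [pw, Fin.sum_univ_three] <;>
    simp only [hA0, hA1, hA2, hA3', hA4', hA5'] <;> ring

/-! ### Invariants of sums of three fifth powers -/

/-- Coefficients `aₖ = (5 choose k) Aₖ` from normalised coefficients. -/
def unn (A : Fin 6 → ℂ) : Fin 6 → ℂ := fun k => (Nat.choose 5 k : ℂ) * A k
/-- Normalised coefficients `Aₖ = aₖ / (5 choose k)`. -/
def nrm (a : Fin 6 → ℂ) : Fin 6 → ℂ := fun k => (Nat.choose 5 k : ℂ)⁻¹ * a k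

theorem choose_ne (k : Fin 6) : (Nat.choose 5 k : ℂ) ≠ 0 :=
  Nat.cast_ne_zero.2 (Nat.choose_pos (by omega)).ne'

theorem nrm_unn (A) : nrm (unn A) = A := by
  funext k; exact inv_mul_cancel_left₀ (choose_ne k) _

theorem unn_nrm (A) : unn (nrm A) = A := by
  funext k; exact mul_inv_cancel_left₀ (choose_ne k) _

/-- The normalised coefficients, as polynomials in `a₀,…,a₅`. -/
def nX : Fin 6 → MvPolynomial (Fin 6) ℂ := fun k => C ((Nat.choose 5 k : ℂ)⁻¹) * X k
/-- The invariant `fJ` as a polynomial in the coefficients `a₀,…,a₅`. -/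
def JP : MvPolynomial (Fin 6) ℂ := fJ nX
/-- The invariant `fK` as a polynomial in the coefficients `a₀,…,a₅`. -/
def KP : MvPolynomial (Fin 6) ℂ := fK nX
/-- The invariant `fL` as a polynomial in the coefficients `a₀,…,a₅`. -/
def LP : MvPolynomial (Fin 6) ℂ := fL nX

theorem eval_nX (a : Fin 6 → ℂ) (k) : eval a (nX k) = nrm a k := by simp [nX, nrm]

theorem eval_JP (a) : eval a JP = fJ (nrm a) := by
  simp [JP, fJ, qi0, qi1, qi2, eval_nX]
theorem eval_KP (a) : eval a KP = fK (nrm a) := by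
  simp [KP, fK, qi0, qi1, qi2, hk0, hk1, hk2, hk3, eval_nX]
theorem eval_LP (a) : eval a LP = fL (nrm a) := by
  simp [LP, fL, hk0, hk1, hk2, hk3, eval_nX]

theorem formOf_unn_pw (α β : Fin 3 → ℂ) :
    formOf (unn (pw α β)) = ∑ i, (C (α i) * X 0 + C (β i) * X 1) ^ 5 := by
  have h : Nat.choose 5 2 = 10 ∧ Nat.choose 5 3 = 10 := by decide
  simp only [formOf, unn, pw, Fin.sum_univ_six, Fin.sum_univ_three]
  have h5 : (C (5 : ℂ) : P2) = 5 := map_ofNat C 5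
  have h10 : (C (10 : ℂ) : P2) = 10 := map_ofNat C 10
  simp [h.1, h.2, h5, h10]
  ring

/-- An invariant takes the same value on `∑ ℓᵢ⁵` and on `∑ (ℓᵢ ∘ h)⁵` for `h ∈ SL₂`. -/
theorem inv_pw {P : MvPolynomial (Fin 6) ℂ} (hinv : IsInvariantPoly P) (α β : Fin 3 → ℂ)
    (p q r s : ℂ) (hdet : p * s - q * r = 1) :
    eval (unn (pw (fun i => α i * p + β i * r) (fun i => α i * q + β i * s))) P
      = eval (unn (pw α β)) P := by
  obtain ⟨h, hh⟩ : ∃ h : Matrix.SpecialLinearGroup (Fin 2) ℂ,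
      (h : Matrix (Fin 2) (Fin 2) ℂ) = !![p, q; r, s] :=
    ⟨⟨!![p, q; r, s], by simp [Matrix.det_fin_two, hdet]⟩, rfl⟩
  have key : formOf (unn (pw (fun i => α i * p + β i * r) (fun i => α i * q + β i * s)))
      = actSL h⁻¹ (formOf (unn (pw α β))) := by
    rw [formOf_unn_pw, formOf_unn_pw, actSL, inv_inv, hh, map_sum]
    refine Finset.sum_congr rfl fun i _ => ?_
    simp only [map_pow, map_add, map_mul, aeval_X, Fin.sum_univ_two, aeval_C, algebraMap_eq,
      Matrix.of_apply, Matrix.cons_val_zero, Matrix.cons_val_one, Matrix.cons_val',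
      Matrix.cons_val_fin_one]
    ring
  rw [← hinv h⁻¹ (unn (pw α β)), ← key, qcoeffs_formOf]

/-- Normalised coefficients of Sylvester's form `u x₁⁵ + v x₂⁵ - w (x₁ + x₂)⁵`. -/
def syl {R : Type*} [CommRing R] (u v w : R) : Fin 6 → R :=
  ![u - w, -w, -w, -w, -w, v - w]

theorem syl_eq_pw (a b c : ℂ) : syl (a ^ 5) (b ^ 5) (c ^ 5) = pw ![a, 0, -c] ![0, b, -c] := by
  funext k
  fin_cases k <;> simp [syl, pw, Fin.sum_univ_three] <;> ring

theorem syl_eq_pw' (a b c : ℂ) : syl (a ^ 5) (b ^ 5) (c ^ 5) = pw ![0, -c, a] ![b, -c, 0] := by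
  funext k
  fin_cases k <;> simp [syl, pw, Fin.sum_univ_three] <;> ring

/-- The substitution permuting the three linear forms `x₁`, `x₂`, `-(x₁ + x₂)` cyclically has
determinant `1`. -/
theorem inv_syl_cycle {P : MvPolynomial (Fin 6) ℂ} (hinv : IsInvariantPoly P) (u v w : ℂ) :
    eval (unn (syl w u v)) P = eval (unn (syl u v w)) P := by
  obtain ⟨a, rfl⟩ := IsAlgClosed.exists_pow_nat_eq u (n := 5) (by norm_num)
  obtain ⟨b, rfl⟩ := IsAlgClosed.exists_pow_nat_eq v (n := 5) (by norm_num)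
  obtain ⟨c, rfl⟩ := IsAlgClosed.exists_pow_nat_eq w (n := 5) (by norm_num)
  rw [syl_eq_pw a b c, ← inv_pw hinv _ _ 0 1 (-1) (-1) (by ring), syl_eq_pw']
  congr 2
  funext k
  fin_cases k <;> simp [unn, pw, Fin.sum_univ_three]

theorem eval_smul_of_homogeneous {n d : ℕ} {P : MvPolynomial (Fin n) ℂ} (hP : P.IsHomogeneous d)
    (t : ℂ) (a : Fin n → ℂ) : eval (fun k => t * a k) P = t ^ d * eval a P := by
  rw [eval_eq, eval_eq, Finset.mul_sum]
  refine Finset.sum_congr rfl fun m hm => ?_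
  have := hP.degree_eq_sum_deg_support hm
  simp only [mul_pow, Finset.prod_mul_distrib, Finset.prod_pow_eq_pow_sum]
  rw [← this]
  ring

/-- Exchanging `x₁` and `x₂` has determinant `-1`; multiplied by `i` it lies in `SL₂`, and scales
the fifth powers by `i⁵ = i`, which is harmless in degrees divisible by `4`. -/
theorem inv_syl_swap {P : MvPolynomial (Fin 6) ℂ} {d : ℕ} (hP : P.IsHomogeneous d) (hd : 4 ∣ d)
    (hinv : IsInvariantPoly P) (u v w : ℂ) :
    eval (unn (syl v u w)) P = eval (unn (syl u v w)) P := by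
  obtain ⟨a, rfl⟩ := IsAlgClosed.exists_pow_nat_eq u (n := 5) (by norm_num)
  obtain ⟨b, rfl⟩ := IsAlgClosed.exists_pow_nat_eq v (n := 5) (by norm_num)
  obtain ⟨c, rfl⟩ := IsAlgClosed.exists_pow_nat_eq w (n := 5) (by norm_num)
  have hI : Complex.I ^ 5 = Complex.I := by
    rw [show (5 : ℕ) = 4 + 1 by rfl, pow_succ, Complex.I_pow_four, one_mul]
  have h1 : Complex.I ^ d = 1 := by
    obtain ⟨e, rfl⟩ := hd
    rw [pow_mul, Complex.I_pow_four, one_pow]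
  rw [syl_eq_pw a b c, ← inv_pw hinv _ _ 0 Complex.I Complex.I 0
    (by linear_combination -Complex.I_mul_I)]
  rw [← one_mul (eval (unn (syl _ _ _)) P), ← h1, ← eval_smul_of_homogeneous hP]
  congr 2
  funext k
  fin_cases k <;> simp [unn, syl, pw, Fin.sum_univ_three] <;> ring_nf <;> simp only [hI]

/-! ### Reduction to Sylvester's form -/

/-- The elementary symmetric functions of three numbers. -/
def el3 (u v w : ℂ) : Fin 3 → ℂ := ![u + v + w, u * v + v * w + w * u, u * v * w]

/-- The three basic invariants as a point of `ℂ³`. -/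
def jkl (A : Fin 6 → ℂ) : Fin 3 → ℂ := ![fJ A, fK A, fL A]

/-- A general quintic is equivalent under `SL₂` to a Sylvester form
`u x₁⁵ + v x₂⁵ - w (x₁ + x₂)⁵`; the statement records the values of all invariants. -/
theorem exists_syl (A : Fin 6 → ℂ) (h3 : hk3 A ≠ 0) (hL : fL A ≠ 0) :
    ∃ u v w : ℂ, fJ A = (u * v + v * w + w * u) ^ 2 - 4 * (u + v + w) * (u * v * w) ∧
      fK A = (u * v * w) ^ 2 * (u * v + v * w + w * u) ∧ fL A = (u * v * w) ^ 4 ∧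
      ∀ P : MvPolynomial (Fin 6) ℂ, IsInvariantPoly P →
        eval (unn A) P = eval (unn (syl u v w)) P := by
  obtain ⟨α, β, rfl⟩ := exists_pw A h3 hL
  have hb := hL
  rw [fL_pw] at hb
  have h01 : bk α β 0 1 ≠ 0 := by rintro h; simp [h] at hb
  have h12 : bk α β 1 2 ≠ 0 := by rintro h; simp [h] at hb
  have h20 : bk α β 2 0 ≠ 0 := by rintro h; simp [h] at hb
  obtain ⟨a, ha⟩ := IsAlgClosed.exists_pow_nat_eq (bk α β 0 1 * bk α β 2 0 / bk α β 1 2)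
    (n := 2) (by norm_num)
  have ha0 : a ≠ 0 := by
    rintro rfl
    have : bk α β 0 1 * bk α β 2 0 / bk α β 1 2 ≠ 0 := by positivity
    exact this (by rw [← ha]; norm_num)
  obtain ⟨b, hab⟩ : ∃ b, a * b = bk α β 0 1 := ⟨bk α β 0 1 / a, by field_simp⟩
  obtain ⟨c, hac⟩ : ∃ c, a * c = bk α β 2 0 := ⟨bk α β 2 0 / a, by field_simp⟩
  have hbc : b * c = bk α β 1 2 := by
    have : a ^ 2 * (b * c) = a ^ 2 * bk α β 1 2 := by
      rw [show a ^ 2 * (b * c) = (a * b) * (a * c) by ring, hab, hac, ha]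
      field_simp
    exact mul_left_cancel₀ (pow_ne_zero 2 ha0) this
  refine ⟨a ^ 5, b ^ 5, c ^ 5, ?_, ?_, ?_, ?_⟩
  · rw [fJ_pw, ← hab, ← hac, ← hbc]; ring
  · rw [fK_pw, ← hab, ← hac, ← hbc]; ring
  · rw [fL_pw, ← hab, ← hac, ← hbc]; ring
  · intro P hP
    have hb0 : b ≠ 0 := by rintro rfl; exact h01 (by rw [← hab]; ring)
    rw [← inv_pw hP α β (β 1 * a / bk α β 0 1) (-β 0 * b / bk α β 0 1)
      (-α 1 * a / bk α β 0 1) (α 0 * b / bk α β 0 1), syl_eq_pw]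
    · have e1 : (fun i => α i * (β 1 * a / bk α β 0 1) + β i * (-α 1 * a / bk α β 0 1))
          = ![a, 0, -c] := by
        funext i
        fin_cases i
        · simp; field_simp; simp only [bk]; ring
        · simp; field_simp; ring
        · simp; field_simp
          rw [← hab, show -(a * b * c) = -(a * (b * c)) by ring, hbc]; simp only [bk]; ring
      have e2 : (fun i => α i * (-β 0 * b / bk α β 0 1) + β i * (α 0 * b / bk α β 0 1))
          = ![0, b, -c] := by
        funext i
        fin_cases i
        · simp; field_simp; ring
        · simp; field_simp; simp only [bk]; ring
        · simp; field_simp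
          rw [← hab, show -(a * b * c) = -(b * (a * c)) by ring, hac]; simp only [bk]; ring
      rw [e1, e2]
    · field_simp
      rw [show bk α β 0 1 ^ 2 = (a * b) * bk α β 0 1 by rw [hab]; ring]
      simp only [bk]; ring

theorem eval_aeval_mv {σ τ : Type*} (f : σ → MvPolynomial τ ℂ) (P : MvPolynomial σ ℂ)
    (x : τ → ℂ) : eval x (aeval f P) = eval (fun k => eval x (f k)) P := by
  induction P using MvPolynomial.induction_on with
  | C a => simp
  | add p q hp hq => rw [map_add, map_add, map_add, hp, hq]
  | mul_X p i hp => rw [map_mul, map_mul, map_mul, hp, aeval_X, eval_X]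

/-- Extraction of the weighted-homogeneous part of degree `d` from the scaling behaviour of a
value. -/
theorem eval_component_of_scaling (Q : MvPolynomial (Fin 3) ℂ) (wt : Fin 3 → ℕ) (d : ℕ)
    (x : Fin 3 → ℂ) (y : ℂ) (h : ∀ t : ℂ, t ^ d * y = eval (fun i => t ^ wt i * x i) Q) :
    y = eval x (weightedHomogeneousComponent wt d Q) := by
  have hpoly : Polynomial.C y * Polynomial.X ^ d
      = ∑ m ∈ Q.support, Polynomial.C (coeff m Q * ∏ i, x i ^ m i)
        * Polynomial.X ^ (Finsupp.weight wt m) := by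
    refine Polynomial.funext fun t => ?_
    simp only [Polynomial.eval_mul, Polynomial.eval_C, Polynomial.eval_pow, Polynomial.eval_X,
      Polynomial.eval_finsetSum]
    rw [mul_comm, h t, eval_eq']
    refine Finset.sum_congr rfl fun m _ => ?_
    rw [Finsupp.weight_apply, Finsupp.sum_fintype _ _ (by simp)]
    simp only [mul_pow, Finset.prod_mul_distrib, ← pow_mul, Finset.prod_pow_eq_pow_sum, smul_eq_mul]
    simp only [mul_comm (wt _)]
    ring
  have hc := congrArg (fun p => Polynomial.coeff p d) hpoly
  simp only [Polynomial.coeff_C_mul, Polynomial.coeff_X_pow, Polynomial.finsetSum_coeff] at hc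
  simp only [if_true, mul_one] at hc
  rw [hc, weightedHomogeneousComponent_apply, map_sum, Finset.sum_filter]
  refine Finset.sum_congr rfl fun m _ => ?_
  by_cases hm : d = Finsupp.weight wt m
  · rw [if_pos hm, if_pos hm.symm, eval_monomial, Finsupp.prod_fintype _ _ (by simp), mul_one]
  · rw [if_neg hm, if_neg (Ne.symm hm), mul_zero]

/-- On Sylvester forms an invariant is an isobaric polynomial in the elementary symmetric
functions of `u, v, w`. -/
theorem inv_syl_esymm {P : MvPolynomial (Fin 6) ℂ} {d : ℕ} (hP : P.IsHomogeneous d) (hd : 4 ∣ d)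
    (hinv : IsInvariantPoly P) : ∃ G : MvPolynomial (Fin 3) ℂ,
      G.IsWeightedHomogeneous ![1, 2, 3] d ∧
      ∀ u v w, eval (unn (syl u v w)) P = eval (el3 u v w) G := by
  set p : MvPolynomial (Fin 3) ℂ :=
    aeval (fun k : Fin 6 => C (Nat.choose 5 k : ℂ) *
      syl (X 0) (X 1) (X 2 : MvPolynomial (Fin 3) ℂ) k) P
    with hp
  have hev : ∀ x : Fin 3 → ℂ, eval x p = eval (unn (syl (x 0) (x 1) (x 2))) P := by
    intro x
    rw [hp, eval_aeval_mv]
    congr 2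
    funext k
    fin_cases k <;> simp [unn, syl]
  have hsym : p.IsSymmetric := by
    intro e
    refine MvPolynomial.funext fun x => ?_
    rw [eval_rename, hev, hev]
    have he : ∀ e : Equiv.Perm (Fin 3), (e 0 = 0 ∧ e 1 = 1 ∧ e 2 = 2) ∨
        (e 0 = 1 ∧ e 1 = 0 ∧ e 2 = 2) ∨ (e 0 = 2 ∧ e 1 = 0 ∧ e 2 = 1) ∨
        (e 0 = 0 ∧ e 1 = 2 ∧ e 2 = 1) ∨ (e 0 = 1 ∧ e 1 = 2 ∧ e 2 = 0) ∨
        (e 0 = 2 ∧ e 1 = 1 ∧ e 2 = 0) := by decide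
    simp only [Function.comp_apply]
    rcases he e with ⟨h0, h1, h2⟩ | ⟨h0, h1, h2⟩ | ⟨h0, h1, h2⟩ | ⟨h0, h1, h2⟩ | ⟨h0, h1, h2⟩ |
      ⟨h0, h1, h2⟩ <;> rw [h0, h1, h2]
    · exact inv_syl_swap hP hd hinv _ _ _
    · exact inv_syl_cycle hinv _ _ _
    · rw [inv_syl_swap hP hd hinv (x 2) (x 0), inv_syl_cycle hinv]
    · rw [← inv_syl_cycle hinv]
    · rw [inv_syl_swap hP hd hinv (x 1) (x 2), ← inv_syl_cycle hinv]
  obtain ⟨G, hG⟩ := esymmAlgHom_fin_surjective ℂ (m := 3) (n := 3) le_rfl ⟨p, hsym⟩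
  have hG' : _ = p := congrArg Subtype.val hG
  rw [esymmAlgHom_apply] at hG'
  have hGe : ∀ u v w, eval (unn (syl u v w)) P = eval (el3 u v w) G := by
    intro u v w
    have h := hev ![u, v, w]
    rw [← hG', eval_aeval_mv] at h
    simp only [Matrix.cons_val_zero, Matrix.cons_val_one, Matrix.cons_val] at h
    rw [← h]
    congr 2
    funext k
    have h1 : Finset.powersetCard 1 (Finset.univ : Finset (Fin 3)) = {{0}, {1}, {2}} := by decide
    have h2 : Finset.powersetCard 2 (Finset.univ : Finset (Fin 3)) = {{0, 1}, {1, 2}, {2, 0}} := by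
      decide
    have h3 : Finset.powersetCard 3 (Finset.univ : Finset (Fin 3)) = {{0, 1, 2}} := by decide
    have d1 : ({0} : Finset (Fin 3)) ∉ ({{1}, {2}} : Finset (Finset (Fin 3))) := by decide
    have d2 : ({0, 1} : Finset (Fin 3)) ∉ ({{1, 2}, {2, 0}} : Finset (Finset (Fin 3))) := by decide
    have d3 : ({1, 2} : Finset (Fin 3)) ∉ ({{2, 0}} : Finset (Finset (Fin 3))) := by decide
    fin_cases k
    · simp [esymm, h1, Finset.sum_insert d1, el3]; ring
    · simp [esymm, h2, Finset.sum_insert d2, Finset.sum_insert d3, el3]; ring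
    · simp [esymm, h3, el3]; ring
  refine ⟨weightedHomogeneousComponent ![1, 2, 3] d G,
    weightedHomogeneousComponent_isWeightedHomogeneous _ _, fun u v w => ?_⟩
  refine eval_component_of_scaling _ _ _ _ _ fun t => ?_
  rw [← eval_smul_of_homogeneous hP]
  convert hGe (t * u) (t * v) (t * w) using 2
  · congr 1; funext k; fin_cases k <;> simp [unn, syl] <;> ring
  · congr 1; funext k; fin_cases k <;> simp [el3] <;> ring

/-! ### Invariants as polynomials in `J`, `K`, `L` -/

/-- After multiplication by a power of `e₃`, an isobaric polynomial of degree divisible by `4` in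
the `eᵢ` becomes a polynomial in the values of the basic invariants on the Sylvester form. -/
theorem clear_e3 {G : MvPolynomial (Fin 3) ℂ} {d : ℕ} (hd : 4 ∣ d)
    (hG : G.IsWeightedHomogeneous ![1, 2, 3] d) : ∃ Q : MvPolynomial (Fin 3) ℂ,
      ∀ e1 e2 e3 : ℂ, (e3 ^ 4) ^ (2 * d) * eval ![e1, e2, e3] G
        = eval ![e2 ^ 2 - 4 * e1 * e3, e3 ^ 2 * e2, e3 ^ 4] Q := by
  refine ⟨∑ m ∈ G.support, C (coeff m G) * (C (1 / 4) * (X 1 ^ 2 - X 0 * X 2)) ^ m 0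
    * X 1 ^ m 1 * X 2 ^ ((m 2 + 8 * d - 5 * m 0 - 2 * m 1) / 4), fun e1 e2 e3 => ?_⟩
  rw [eval_eq', Finset.mul_sum, map_sum]
  refine Finset.sum_congr rfl fun m hm => ?_
  have hw := hG (mem_support_iff.1 hm)
  rw [Finsupp.weight_apply, Finsupp.sum_fintype _ _ (by simp), Fin.sum_univ_three] at hw
  simp at hw
  obtain ⟨k, rfl⟩ := hd
  obtain ⟨M, hM⟩ : ∃ M, m 2 + 8 * (4 * k) = 5 * m 0 + 2 * m 1 + 4 * M :=
    ⟨(m 2 + 8 * (4 * k) - 5 * m 0 - 2 * m 1) / 4, by omega⟩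
  have hM' : (m 2 + 8 * (4 * k) - 5 * m 0 - 2 * m 1) / 4 = M := by omega
  rw [hM', Fin.prod_univ_three]
  simp
  have h1 : 4⁻¹ * ((e3 ^ 2 * e2) ^ 2 - (e2 ^ 2 - 4 * e1 * e3) * e3 ^ 4) = e1 * e3 ^ 5 := by ring
  rw [h1]
  have h2 : (e3 ^ 4) ^ (2 * (4 * k)) * e3 ^ m 2 = e3 ^ (5 * m 0 + 2 * m 1 + 4 * M) := by
    rw [← hM, ← pow_mul, ← pow_add]; congr 1; ring
  calc _ = coeff m G * (e1 ^ m 0 * e2 ^ m 1) * ((e3 ^ 4) ^ (2 * (4 * k)) * e3 ^ m 2) := by ring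
    _ = _ := by rw [h2, pow_add, pow_add, pow_mul, pow_mul, pow_mul]; ring

theorem LP_ne_zero : LP ≠ 0 := by
  intro h
  have := eval_LP (unn (pw ![1, 0, -1] ![0, 1, -1]))
  rw [nrm_unn, fL_pw, h] at this
  simp [bk] at this

theorem H3_ne_zero : hk3 nX ≠ 0 := by
  intro h
  have := congrArg (eval ![0, 0, 10, 0, 0, 0]) h
  have hc : Nat.choose 5 2 = 10 := by decide
  simp [hk3, eval_nX, nrm, hc] at this

theorem eval_H3 (a) : eval a (hk3 nX) = hk3 (nrm a) := by
  simp [hk3, eval_nX]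

theorem eval_aeval_JKL (Q : MvPolynomial (Fin 3) ℂ) (a) :
    eval a (aeval ![JP, KP, LP] Q) = eval (jkl (nrm a)) Q := by
  rw [eval_aeval_mv]
  congr 2
  funext k
  fin_cases k <;> simp [jkl, eval_JP, eval_KP, eval_LP]

/-- The identity is checked where `L` and the leading coefficient `hk3` of the canonizant do not
vanish, by reduction to a Sylvester form. -/
theorem LP_pow_mul {P : MvPolynomial (Fin 6) ℂ} {d : ℕ} (hP : P.IsHomogeneous d) (hd : 4 ∣ d)
    (hinv : IsInvariantPoly P) : ∃ (N : ℕ) (Q : MvPolynomial (Fin 3) ℂ),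
      LP ^ N * P = aeval ![JP, KP, LP] Q := by
  obtain ⟨G, hG, hGe⟩ := inv_syl_esymm hP hd hinv
  obtain ⟨Q, hQ⟩ := clear_e3 hd hG
  refine ⟨2 * d, Q, mul_left_cancel₀ (mul_ne_zero H3_ne_zero LP_ne_zero) ?_⟩
  refine MvPolynomial.funext fun a => ?_
  simp only [map_mul, map_pow]
  rw [eval_H3, eval_LP, eval_aeval_JKL]
  by_cases h3 : hk3 (nrm a) = 0
  · simp [h3]
  by_cases hL : fL (nrm a) = 0
  · simp [hL]
  congr 1
  obtain ⟨u, v, w, hJ, hK, hLL, hPe⟩ := exists_syl _ h3 hL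
  have := hPe P hinv
  rw [unn_nrm, hGe] at this
  rw [this, jkl, hJ, hK, hLL]
  exact hQ _ _ _

theorem X_dvd_of_eval {Q : MvPolynomial (Fin 3) ℂ} (h : ∀ x y, eval ![x, y, 0] Q = 0) :
    X 2 ∣ Q := by
  have h0 : aeval ![X 0, X 1, (0 : MvPolynomial (Fin 3) ℂ)] Q = 0 := by
    refine MvPolynomial.funext fun x => ?_
    rw [eval_aeval_mv, map_zero, ← h (x 0) (x 1)]
    congr 2
    funext k
    fin_cases k <;> simp
  have h1 : (Ideal.Quotient.mkₐ ℂ (Ideal.span {X 2})).comp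
      (aeval ![X 0, X 1, (0 : MvPolynomial (Fin 3) ℂ)])
      = Ideal.Quotient.mkₐ ℂ (Ideal.span {(X 2 : MvPolynomial (Fin 3) ℂ)}) := by
    refine MvPolynomial.algHom_ext fun k => ?_
    fin_cases k
    · simp
    · simp
    · simp only [AlgHom.comp_apply, aeval_X]
      symm
      simp
  have h2 := congrArg (fun f => f Q) h1
  simp only [AlgHom.comp_apply, h0, map_zero] at h2
  exact Ideal.mem_span_singleton.1 (Ideal.Quotient.eq_zero_iff_mem.1 h2.symm)

/-- A power of `L` can be cancelled from a polynomial in `J`, `K`, `L`: on the forms with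
coefficients `(s, 5t, 0, 0, 0, 1)` one has `L = 0`, while `J` and `K` take arbitrary values. -/
theorem LP_cancel (P : MvPolynomial (Fin 6) ℂ) (N : ℕ) (Q : MvPolynomial (Fin 3) ℂ)
    (h : LP ^ N * P = aeval ![JP, KP, LP] Q) :
    ∃ Q' : MvPolynomial (Fin 3) ℂ, P = aeval ![JP, KP, LP] Q' := by
  induction N generalizing Q with
  | zero => exact ⟨Q, by simpa using h⟩
  | succ N ih =>
    have hX : X 2 ∣ Q := by
      refine X_dvd_of_eval fun x y => ?_
      obtain ⟨s, rfl⟩ := IsAlgClosed.exists_pow_nat_eq x (n := 2) (by norm_num)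
      obtain ⟨t, ht⟩ := IsAlgClosed.exists_pow_nat_eq (-y / 2) (n := 5) (by norm_num)
      have hJ : jkl ![s, t, 0, 0, 0, 1] = ![s ^ 2, y, 0] := by
        have hy : y = -2 * t ^ 5 := by rw [ht]; ring
        rw [hy]
        funext k
        fin_cases k <;> simp [jkl, fJ, fK, fL, qi0, qi1, qi2, hk0, hk1, hk2, hk3] <;> ring
      have := congrArg (eval (unn ![s, t, 0, 0, 0, 1])) h
      rw [eval_aeval_JKL, nrm_unn, hJ, map_mul, map_pow, eval_LP, nrm_unn] at this
      rw [← this, show fL ![s, t, 0, 0, 0, 1] = 0 from congrFun hJ 2]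
      simp
    obtain ⟨Q', rfl⟩ := hX
    refine ih Q' (mul_left_cancel₀ LP_ne_zero ?_)
    rw [map_mul, aeval_X] at h
    rw [← mul_assoc, ← pow_succ', h]
    rfl

/-- Every invariant of degree divisible by `4` is an isobaric polynomial in `J`, `K`, `L`. -/
theorem inv_eq_JKL {P : MvPolynomial (Fin 6) ℂ} {d : ℕ} (hP : P.IsHomogeneous d) (hd : 4 ∣ d)
    (hinv : IsInvariantPoly P) : ∃ Q : MvPolynomial (Fin 3) ℂ,
      Q.IsWeightedHomogeneous ![4, 8, 12] d ∧ ∀ a, eval a P = eval (jkl (nrm a)) Q := by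
  obtain ⟨N, Q, h⟩ := LP_pow_mul hP hd hinv
  obtain ⟨Q', h'⟩ := LP_cancel P N Q h
  refine ⟨weightedHomogeneousComponent ![4, 8, 12] d Q',
    weightedHomogeneousComponent_isWeightedHomogeneous _ _, fun a => ?_⟩
  refine eval_component_of_scaling _ _ _ _ _ fun t => ?_
  rw [← eval_smul_of_homogeneous hP, h', eval_aeval_JKL]
  congr 2
  have : nrm (fun k => t * a k) = fun k => t * nrm a k := by funext k; simp only [nrm]; ring
  rw [this]
  funext k
  fin_cases k <;> simp [jkl, fJ, fK, fL, qi0, qi1, qi2, hk0, hk1, hk2, hk3] <;> ring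

/-! ### Symmetric functions for roots `∞, 0, r, s, t` -/

section

variable {R : Type*} [CommRing R]

/-- The discriminant of the cubic `x³ - a x² + b x - c`. -/
def el_V (a b c : R) : R :=
  -4 * a ^ 3 * c + a ^ 2 * b ^ 2 + 18 * a * b * c - 4 * b ^ 3 - 27 * c ^ 2

/-- The symmetric function `p₂³ d₃ d₄ + d₂ p₃³ d₄ + d₂ d₃ p₄³` of the roots `r, s, t` of
`x³ - a x² + b x - c`, divided by `c²`. Here `p₂ = s² - st + t²` and `d₂ = (st(s - t))²`, and
`p₃`, `d₃`, `p₄`, `d₄` are the analogues for the pairs `r, t` and `r, s`. -/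
def el_q1 (a b c : R) : R :=
  8 * a ^ 6 * c ^ 2 - 6 * a ^ 5 * b ^ 2 * c + a ^ 4 * b ^ 4 - 48 * a ^ 4 * b * c ^ 2 + 37 *
    a ^ 3 * b ^ 3 * c + 19 * a ^ 3 * c ^ 3 - 6 * a ^ 2 * b ^ 5 + 36 * a ^ 2 * b ^ 2 * c ^ 2 -
    48 * a * b ^ 4 * c + 72 * a * b * c ^ 3 + 8 * b ^ 6 + 19 * b ^ 3 * c ^ 2 - 216 * c ^ 4

/-- The symmetric function `p₂³ p₃³ d₄ + p₂³ d₃ p₄³ + d₂ p₃³ p₄³`, with `pᵢ`, `dᵢ` as in `el_q1`. -/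
def el_q2 (a b c : R) : R :=
  -4 * a ^ 9 * c ^ 3 + a ^ 8 * b ^ 2 * c ^ 2 + 46 * a ^ 7 * b * c ^ 3 - 11 * a ^ 6 * b ^ 3 *
    c ^ 2 + 19 * a ^ 6 * c ^ 4 - 269 * a ^ 5 * b ^ 2 * c ^ 3 + 89 * a ^ 4 * b ^ 4 * c ^ 2 + 34
    * a ^ 4 * b * c ^ 4 - 11 * a ^ 3 * b ^ 6 * c + 667 * a ^ 3 * b ^ 3 * c ^ 3 + 168 * a ^ 3 *
    c ^ 5 + a ^ 2 * b ^ 8 - 269 * a ^ 2 * b ^ 5 * c ^ 2 - 1044 * a ^ 2 * b ^ 2 * c ^ 4 + 46 *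
    a * b ^ 7 * c + 34 * a * b ^ 4 * c ^ 3 + 784 * a * b * c ^ 5 - 4 * b ^ 9 + 19 * b ^ 6 * c
    ^ 2 + 168 * b ^ 3 * c ^ 4 - 576 * c ^ 6

/-- The symmetric function `p₂ p₃ p₄`, with `pᵢ` as in `el_q1`. -/
def el_q3 (a b c : R) : R :=
  -3 * a ^ 3 * c + a ^ 2 * b ^ 2 + 10 * a * b * c - 3 * b ^ 3 - 8 * c ^ 2

/-- The value of `-fJ / 16` on `(0, -2, a, -b, 2c, 0)`, which is ten times the vector of normalised
coefficients of `-x₁ x₂ (x₁³ - a x₁² x₂ + b x₁ x₂² - c x₂³)`. -/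
def el_J (a b c : R) : R :=
  -6 * a ^ 3 * c + 2 * a ^ 2 * b ^ 2 + 19 * a * b * c - 6 * b ^ 3 - 9 * c ^ 2

/-- The value of `fL / 4` on `(0, -2, a, -b, 2c, 0)`. -/
def el_L (a b c : R) : R :=
  8 * a ^ 9 * c ^ 3 - 83 * a ^ 8 * b ^ 2 * c ^ 2 + 36 * a ^ 7 * b ^ 4 * c + 224 * a ^ 7 * b
    * c ^ 3 - 4 * a ^ 6 * b ^ 6 + 708 * a ^ 6 * b ^ 3 * c ^ 2 - 64 * a ^ 6 * c ^ 4 - 330 * a ^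
    5 * b ^ 5 * c - 4400 * a ^ 5 * b ^ 2 * c ^ 3 + 36 * a ^ 4 * b ^ 7 - 556 * a ^ 4 * b ^ 4 *
    c ^ 2 + 7872 * a ^ 4 * b * c ^ 4 + 708 * a ^ 3 * b ^ 6 * c + 13856 * a ^ 3 * b ^ 3 * c ^ 3
    - 4096 * a ^ 3 * c ^ 5 - 83 * a ^ 2 * b ^ 8 - 4400 * a ^ 2 * b ^ 5 * c ^ 2 - 45632 * a ^ 2
    * b ^ 2 * c ^ 4 + 224 * a * b ^ 7 * c + 7872 * a * b ^ 4 * c ^ 3 + 59904 * a * b * c ^ 5 +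
    8 * b ^ 9 - 64 * b ^ 6 * c ^ 2 - 4096 * b ^ 3 * c ^ 4 - 27648 * c ^ 6

/-- The discriminant `c² el_V` of `-x₁ x₂ (x₁³ - a x₁² x₂ + b x₁ x₂² - c x₂³)`. -/
def el_D (a b c : R) : R :=
  -4 * a ^ 3 * c ^ 3 + a ^ 2 * b ^ 2 * c ^ 2 + 18 * a * b * c ^ 3 - 4 * b ^ 3 * c ^ 2 - 27 *
    c ^ 4

theorem el_V_eq (r s t : R) :
    ((s-t)*(t-r)*(r-s))^2 = el_V (r + s + t) (r * s + s * t + t * r) (r * s * t) := by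
  rw [el_V]; ring

theorem el_q1_eq (r s t : R) :
    (s^2-s*t+t^2)^3*(r*t*(r-t))^2*(r*s*(r-s))^2
      + (s*t*(s-t))^2*(r^2-r*t+t^2)^3*(r*s*(r-s))^2
      + (s*t*(s-t))^2*(r*t*(r-t))^2*(r^2-r*s+s^2)^3
      = (r * s * t)^2 * el_q1 (r + s + t) (r * s + s * t + t * r) (r * s * t) := by
  rw [el_q1]; ring

theorem el_q2_eq (r s t : R) :
    (s^2-s*t+t^2)^3*(r^2-r*t+t^2)^3*(r*s*(r-s))^2
      + (s^2-s*t+t^2)^3*(r*t*(r-t))^2*(r^2-r*s+s^2)^3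
      + (s*t*(s-t))^2*(r^2-r*t+t^2)^3*(r^2-r*s+s^2)^3
      = el_q2 (r + s + t) (r * s + s * t + t * r) (r * s * t) := by
  rw [el_q2]; ring

theorem el_q3_eq (r s t : R) :
    (s^2-s*t+t^2)*(r^2-r*t+t^2)*(r^2-r*s+s^2)
      = el_q3 (r + s + t) (r * s + s * t + t * r) (r * s * t) := by
  rw [el_q3]; ring

variable (a b c : R)

set_option maxHeartbeats 4000000 in
theorem el_JKL : fJ ![0, -2, a, -b, 2 * c, 0] = -16 * el_J a b c ∧
    fK ![0, -2, a, -b, 2 * c, 0] = 2 * (el_J a b c ^ 2 - 125 * el_D a b c) ∧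
    fL ![0, -2, a, -b, 2 * c, 0] = 4 * el_L a b c := by
  refine ⟨?_, ?_, ?_⟩ <;> simp [fJ, fK, fL, qi0, qi1, qi2, hk0, hk1, hk2, hk3, el_J, el_D,
    el_L] <;> ring

theorem el_D_eq : c^2 * el_V a b c = el_D a b c := by
  rw [el_V, el_D]; ring

/-! The identities `el_1`, …, `el_5` express the coefficients of `∏ᵢ (dᵢ + pᵢ³ z)`, computed for
the five points `∞, 0, r, s, t`, through the invariants of the quintic with these roots; powers of
the discriminant are divided out, and `el_5` concerns a cube root of the last coefficient. -/

set_option maxRecDepth 100000 in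
set_option maxHeartbeats 4000000 in
theorem el_1 :
    4*(el_q1 a b c + (b^2-3*a*c)^3 + c^2*(a^2-3*b)^3)
      = el_J a b c ^2 + 35 * el_D a b c := by
  simp only [el_q1, el_J, el_D]; ring

set_option maxRecDepth 100000 in
set_option maxHeartbeats 4000000 in
theorem el_2 :
    200*(el_V a b c * el_q2 a b c + (b^2-3*a*c)^3*el_q1 a b c
      + c^2*(a^2-3*b)^3*el_q1 a b c + c^2*(b^2-3*a*c)^3*(a^2-3*b)^3)
    = 4 * el_J a b c ^ 4 + 500 * el_J a b c ^ 2 * el_D a b c + 3000 * el_D a b c ^ 2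
      + 8 * el_J a b c * el_L a b c := by
  simp only [el_q1, el_q2, el_V, el_J, el_D, el_L]; ring

set_option maxRecDepth 100000 in
set_option maxHeartbeats 4000000 in
theorem el_3 :
    5000*(c^2*el_V a b c^2*el_q3 a b c^3
      + el_V a b c * el_q2 a b c * ((b^2-3*a*c)^3+ c^2*(a^2-3*b)^3)
      + (b^2-3*a*c)^3*(a^2-3*b)^3 * (c^2 * el_q1 a b c))
    = 2*el_J a b c ^6+1225*el_J a b c ^4*el_D a b c+20000*el_J a b c ^2*el_D a b c ^2
      + 53125*el_D a b c ^3 + 8 * el_J a b c ^3* el_L a b c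
      + 1200*el_J a b c *el_D a b c *el_L a b c + 8 *el_L a b c ^2 := by
  simp only [el_q1, el_q2, el_q3, el_V, el_J, el_D, el_L]; ring

set_option maxRecDepth 100000 in
set_option maxHeartbeats 4000000 in
theorem el_4 :
    400*(el_V a b c * el_q3 a b c^3 * ((b^2-3*a*c)^3+ c^2*(a^2-3*b)^3)
      + (b^2-3*a*c)^3*(a^2-3*b)^3 * el_q2 a b c)
    = 2*el_J a b c ^6+307*el_J a b c ^4*el_D a b c-4100*el_J a b c ^2*el_D a b c ^2
      + 1375*el_D a b c ^3 + 4 * el_J a b c ^3* el_L a b c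
      - 36*el_J a b c *el_D a b c *el_L a b c := by
  simp only [el_q1, el_q2, el_q3, el_V, el_J, el_D, el_L]; ring

theorem el_5 : 4*((b^2-3*a*c)*(a^2-3*b)*el_q3 a b c) = el_J a b c ^2 + 3 * el_D a b c := by
  simp only [el_q3, el_J, el_D]; ring
end

/-! ### The formulas for roots in canonical position -/

section
variable {R : Type*} [CommRing R]

/-- The bracket of two points of `R²`, over any commutative ring. -/
def gbr (b c : Fin 2 → R) : R := b 0 * c 1 - b 1 * c 0

/-- `12 S` of the quartic with roots `a, b, c, d`, in terms of the brackets. -/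
def pq (a b c d : Fin 2 → R) : R :=
  (gbr a b * gbr c d) ^ 2 + (gbr a b * gbr c d) * (gbr a c * gbr d b) + (gbr a c * gbr d b) ^ 2

/-- The discriminant of the quartic with roots `a, b, c, d`, in terms of the brackets. -/
def dq (a b c d : Fin 2 → R) : R :=
  (gbr a b * gbr c d * (gbr a c * gbr d b) * (gbr a d * gbr b c)) ^ 2

/-- The five values of `pq` at the quartics obtained by omitting one of the roots. -/
def pI (l : Fin 5 → Fin 2 → R) : Fin 5 → R :=
  ![pq (l 1) (l 2) (l 3) (l 4), pq (l 0) (l 2) (l 3) (l 4), pq (l 0) (l 1) (l 3) (l 4),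
    pq (l 0) (l 1) (l 2) (l 4), pq (l 0) (l 1) (l 2) (l 3)]

/-- The five values of `dq` at the quartics obtained by omitting one of the roots. -/
def dI (l : Fin 5 → Fin 2 → R) : Fin 5 → R :=
  ![dq (l 1) (l 2) (l 3) (l 4), dq (l 0) (l 2) (l 3) (l 4), dq (l 0) (l 1) (l 3) (l 4),
    dq (l 0) (l 1) (l 2) (l 4), dq (l 0) (l 1) (l 2) (l 3)]

/-- The coefficients of `(x₀ + x₁ z + x₂ z²)(q₀ + q₁ z + q₂ z² + q₃ z³)`. -/
def bq (x0 x1 x2 q0 q1 q2 q3 : R) : Fin 6 → R :=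
  ![x0 * q0, x0 * q1 + x1 * q0, x0 * q2 + x1 * q1 + x2 * q0, x0 * q3 + x1 * q2 + x2 * q1,
    x1 * q3 + x2 * q2, x2 * q3]

/-- The coefficients of `∏ᵢ (dᵢ + pᵢ³ z)`. -/
def bsum (p d : Fin 5 → R) : Fin 6 → R :=
  bq (d 0 * d 1) (p 0 ^ 3 * d 1 + d 0 * p 1 ^ 3) (p 0 ^ 3 * p 1 ^ 3)
    (d 2 * d 3 * d 4)
    (p 2 ^ 3 * d 3 * d 4 + d 2 * p 3 ^ 3 * d 4 + d 2 * d 3 * p 4 ^ 3)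
    (p 2 ^ 3 * p 3 ^ 3 * d 4 + p 2 ^ 3 * d 3 * p 4 ^ 3 + d 2 * p 3 ^ 3 * p 4 ^ 3)
    ((p 2 * p 3 * p 4) ^ 3)

/-- The normalised coefficients `aₖ / (5 choose k)`, multiplied by `10` to clear denominators. -/
def nA (a : Fin 6 → R) : Fin 6 → R := ![10 * a 0, 2 * a 1, a 2, a 3, 2 * a 4, 10 * a 5]

/-- The denominators in the formulas for `bsum` in terms of `J, K, L`. -/
def cst : Fin 6 → R :=
  ![32000 ^ 3, 32000 ^ 2 * 800, 32000 * 3125 * 1024, 12800000000, 6400000000, 10 ^ 9]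

/-- The numerators in the formulas for `bsum` in terms of `J, K, L`. -/
def tgt (J K L : R) : Fin 6 → R :=
  ![(J^2 - 128*K)^3, (J^2 - 128*K)^2 * (J^2 - 28*K),
    (J^2 - 128*K) * (2*J^4 - 137*J^2*K + 768*K^2 - 2000*J*L),
    2*J^6 - 243*J^4*K + 3404*J^2*K^2 - 8704*K^3 - 2750*J^3*L + 192000*J*K*L + 1280000*L^2,
    4*J^6 - 236*J^4*K - 4067*J^2*K^2 - 1408*K^3 - 3625*J^3*L - 36000*J*K*L,
    (J^2 - 3*K)^3]

/-- The defect in the formula for the `k`-th coefficient of `∏ᵢ (dᵢ + pᵢ³ z)` in terms of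
`J, K, L`; it vanishes identically, see `eid_eq_zero`. -/
def eid (l : Fin 5 → Fin 2 → R) (k : Fin 6) : R :=
  cst k * bsum (pI l) (dI l) k
    - tgt (fJ (nA (rootCoeffs l))) (fK (nA (rootCoeffs l))) (fL (nA (rootCoeffs l))) k

/-- Five points in canonical position: `∞, 0, r, s, t`. -/
def canon (r s t : R) : Fin 5 → Fin 2 → R := ![![1, 0], ![0, 1], ![r, 1], ![s, 1], ![t, 1]]

theorem nA_canon (r s t : R) : nA (rootCoeffs (canon r s t))
    = ![0, -2, r + s + t, -(r * s + s * t + t * r), 2 * (r * s * t), 0] := by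
  funext k
  fin_cases k <;> simp [nA, rootCoeffs, canon]; ring

theorem pI_canon (r s t : R) : pI (canon r s t) =
    ![(r * s + s * t + t * r) ^ 2 - 3 * (r + s + t) * (r * s * t),
      (r + s + t) ^ 2 - 3 * (r * s + s * t + t * r),
      s^2-s*t+t^2, r^2-r*t+t^2, r^2-r*s+s^2] := by
  funext k
  fin_cases k <;> simp [pI, pq, gbr, canon] <;> ring

theorem dI_canon (r s t : R) : dI (canon r s t) =
    ![(r * s * t) ^ 2 * ((s-t)*(t-r)*(r-s))^2, ((s-t)*(t-r)*(r-s))^2,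
      (s*t*(s-t))^2, (r*t*(r-t))^2, (r*s*(r-s))^2] := by
  funext k
  fin_cases k <;> simp [dI, dq, gbr, canon] <;> ring

theorem bsum_canon (r s t a b c : R) (ha : r + s + t = a) (hb : r * s + s * t + t * r = b)
    (hc : r * s * t = c) : bsum (pI (canon r s t)) (dI (canon r s t)) =
    bq (c ^ 2 * el_V a b c * el_V a b c)
      (el_V a b c * ((b^2-3*a*c)^3 + c^2*(a^2-3*b)^3))
      ((b^2-3*a*c)^3 * (a^2-3*b)^3)
      (c ^ 4 * el_V a b c) (c ^ 2 * el_q1 a b c) (el_q2 a b c) (el_q3 a b c ^ 3) := by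
  have h1 := el_q1_eq r s t
  have h2 := el_q2_eq r s t
  have h3 := el_q3_eq r s t
  have h4 := el_V_eq r s t
  rw [bsum, pI_canon, dI_canon]
  simp only [ha, hb, hc] at h1 h2 h3 h4 ⊢
  simp only [Matrix.cons_val, h1, h2, h3, h4]
  congr 1
  · ring
  · rw [← h4, ← hc]; ring

theorem eid_canon (r s t : R) (k : Fin 6) : eid (canon r s t) k = 0 := by
  obtain ⟨a, ha⟩ : ∃ a, r + s + t = a := ⟨_, rfl⟩
  obtain ⟨b, hb⟩ : ∃ b, r * s + s * t + t * r = b := ⟨_, rfl⟩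
  obtain ⟨c, hc⟩ : ∃ c, r * s * t = c := ⟨_, rfl⟩
  obtain ⟨hJ, hK, hL⟩ := el_JKL a b c
  have h0 := el_D_eq a b c
  have h1 := el_1 a b c
  have h2 := el_2 a b c
  have h3 := el_3 a b c
  have h4 := el_4 a b c
  have h5 := el_5 a b c
  rw [eid, bsum_canon r s t a b c ha hb hc, nA_canon, ha, hb, hc, hJ, hK, hL]
  generalize el_J a b c = J at *
  generalize el_L a b c = L at *
  generalize el_q1 a b c = q1 at *
  generalize el_q2 a b c = q2 at *
  generalize el_q3 a b c = q3 at *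
  generalize el_V a b c = V at *
  generalize b ^ 2 - 3 * a * c = p at *
  generalize a ^ 2 - 3 * b = q at *
  rw [← h0] at *
  fin_cases k <;> simp only [cst, bq, tgt, Fin.reduceFinMk, Matrix.cons_val]
  · ring
  · linear_combination (32000 ^ 2 * 200 * (c ^ 2 * V) ^ 2) * h1
  · linear_combination (512000000 * (c ^ 2 * V)) * h2
  · linear_combination 2560000 * h3
  · linear_combination 16000000 * h4
  · have : ∀ x y : R, x = y → x ^ 3 = y ^ 3 := fun x y h => by rw [h]
    linear_combination 15625000 * this _ _ h5
end

/-! ### Behaviour under unimodular substitutions and scalings -/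

section
variable {R : Type*} [CommRing R]

/-- The normalised coefficients of `F(x₁, x₂ + u x₁)`, where `F` has normalised coefficients `A`. -/
def shA (u : R) (A : Fin 6 → R) : Fin 6 → R :=
  ![A 0 + 5 * u * A 1 + 10 * u^2 * A 2 + 10 * u^3 * A 3 + 5 * u^4 * A 4 + u^5 * A 5,
    A 1 + 4 * u * A 2 + 6 * u^2 * A 3 + 4 * u^3 * A 4 + u^4 * A 5,
    A 2 + 3 * u * A 3 + 3 * u^2 * A 4 + u^3 * A 5,
    A 3 + 2 * u * A 4 + u^2 * A 5, A 4 + u * A 5, A 5]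

theorem qi_shA (u : R) (A : Fin 6 → R) :
    qi0 (shA u A) = qi0 A + u * qi1 A + u ^ 2 * qi2 A ∧
    qi1 (shA u A) = qi1 A + 2 * u * qi2 A ∧ qi2 (shA u A) = qi2 A := by
  refine ⟨?_, ?_, ?_⟩ <;> simp only [qi0, qi1, qi2, shA, Matrix.cons_val] <;> ring

theorem hk_shA (u : R) (A : Fin 6 → R) :
    hk0 (shA u A) = hk0 A ∧ hk1 (shA u A) = hk1 A - 3 * u * hk0 A ∧
    hk2 (shA u A) = hk2 A - 2 * u * hk1 A + 3 * u ^ 2 * hk0 A ∧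
    hk3 (shA u A) = hk3 A - u * hk2 A + u ^ 2 * hk1 A - u ^ 3 * hk0 A := by
  refine ⟨?_, ?_, ?_, ?_⟩ <;> simp only [hk0, hk1, hk2, hk3, shA, Matrix.cons_val] <;> ring

theorem f_shA (u : R) (A : Fin 6 → R) :
    fJ (shA u A) = fJ A ∧ fK (shA u A) = fK A ∧ fL (shA u A) = fL A := by
  obtain ⟨h0, h1, h2⟩ := qi_shA u A
  obtain ⟨k0, k1, k2, k3⟩ := hk_shA u A
  refine ⟨?_, ?_, ?_⟩ <;> simp only [fJ, fK, fL, h0, h1, h2, k0, k1, k2, k3] <;> ring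

/-- The normalised coefficients of `-F(x₂, x₁)`. -/
def rvA (A : Fin 6 → R) : Fin 6 → R := ![-A 5, -A 4, -A 3, -A 2, -A 1, -A 0]

theorem f_rvA (A : Fin 6 → R) :
    fJ (rvA A) = fJ A ∧ fK (rvA A) = fK A ∧ fL (rvA A) = fL A := by
  have h0 : qi0 (rvA A) = qi2 A := by simp only [qi0, qi2, rvA, Matrix.cons_val]; ring
  have h1 : qi1 (rvA A) = qi1 A := by simp only [qi1, rvA, Matrix.cons_val]; ring
  have h2 : qi2 (rvA A) = qi0 A := by simp only [qi0, qi2, rvA, Matrix.cons_val]; ring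
  have k0 : hk0 (rvA A) = hk3 A := by simp only [hk0, hk3, rvA, Matrix.cons_val]; ring
  have k1 : hk1 (rvA A) = hk2 A := by simp only [hk1, hk2, rvA, Matrix.cons_val]; ring
  have k2 : hk2 (rvA A) = hk1 A := by simp only [hk1, hk2, rvA, Matrix.cons_val]; ring
  have k3 : hk3 (rvA A) = hk0 A := by simp only [hk0, hk3, rvA, Matrix.cons_val]; ring
  refine ⟨?_, ?_, ?_⟩ <;> simp only [fJ, fK, fL, h0, h1, h2, k0, k1, k2, k3] <;> ring

theorem f_smul (c : R) (A : Fin 6 → R) :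
    fJ (c • A) = c ^ 4 * fJ A ∧ fK (c • A) = c ^ 8 * fK A ∧ fL (c • A) = c ^ 12 * fL A := by
  have h0 : qi0 (c • A) = c ^ 2 * qi0 A := by simp only [qi0, Pi.smul_apply, smul_eq_mul]; ring
  have h1 : qi1 (c • A) = c ^ 2 * qi1 A := by simp only [qi1, Pi.smul_apply, smul_eq_mul]; ring
  have h2 : qi2 (c • A) = c ^ 2 * qi2 A := by simp only [qi2, Pi.smul_apply, smul_eq_mul]; ring
  have k0 : hk0 (c • A) = c ^ 3 * hk0 A := by simp only [hk0, Pi.smul_apply, smul_eq_mul]; ring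
  have k1 : hk1 (c • A) = c ^ 3 * hk1 A := by simp only [hk1, Pi.smul_apply, smul_eq_mul]; ring
  have k2 : hk2 (c • A) = c ^ 3 * hk2 A := by simp only [hk2, Pi.smul_apply, smul_eq_mul]; ring
  have k3 : hk3 (c • A) = c ^ 3 * hk3 A := by simp only [hk3, Pi.smul_apply, smul_eq_mul]; ring
  refine ⟨?_, ?_, ?_⟩ <;> simp only [fJ, fK, fL, h0, h1, h2, k0, k1, k2, k3] <;> ring

/-- The points `(x, y)` moved to `(x, y + t x)`. -/
def shear (t : R) (l : Fin 5 → Fin 2 → R) : Fin 5 → Fin 2 → R :=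
  fun i => ![l i 0, l i 1 + t * l i 0]

/-- The points `(x, y)` moved to `(y, x)`. -/
def swap (l : Fin 5 → Fin 2 → R) : Fin 5 → Fin 2 → R := fun i => ![l i 1, l i 0]

/-- Each of the five points multiplied by a scalar. -/
def scale (c : Fin 5 → R) (l : Fin 5 → Fin 2 → R) : Fin 5 → Fin 2 → R := fun i => c i • l i

theorem nA_shear (t : R) (l : Fin 5 → Fin 2 → R) :
    nA (rootCoeffs (shear t l)) = shA (-t) (nA (rootCoeffs l)) := by
  funext k
  fin_cases k <;> simp only [nA, rootCoeffs, shear, shA, Fin.reduceFinMk, Matrix.cons_val] <;> ring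

theorem nA_swap (l : Fin 5 → Fin 2 → R) :
    nA (rootCoeffs (swap l)) = rvA (nA (rootCoeffs l)) := by
  funext k
  fin_cases k <;> simp only [nA, rootCoeffs, swap, rvA, Fin.reduceFinMk, Matrix.cons_val] <;> ring

theorem nA_scale (c : Fin 5 → R) (l : Fin 5 → Fin 2 → R) :
    nA (rootCoeffs (scale c l)) = (c 0 * c 1 * c 2 * c 3 * c 4) • nA (rootCoeffs l) := by
  funext k
  fin_cases k <;> simp only [nA, rootCoeffs, scale, Pi.smul_apply, smul_eq_mul,
    Fin.reduceFinMk, Matrix.cons_val] <;> ring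

theorem gbr_shear (t : R) (l : Fin 5 → Fin 2 → R) (i j : Fin 5) :
    gbr (shear t l i) (shear t l j) = gbr (l i) (l j) := by
  simp only [gbr, shear, Matrix.cons_val]; ring

theorem gbr_swap (l : Fin 5 → Fin 2 → R) (i j : Fin 5) :
    gbr (swap l i) (swap l j) = -gbr (l i) (l j) := by
  simp only [gbr, swap, Matrix.cons_val]; ring

theorem gbr_scale (c : Fin 5 → R) (l : Fin 5 → Fin 2 → R) (i j : Fin 5) :
    gbr (scale c l i) (scale c l j) = c i * c j * gbr (l i) (l j) := by
  simp only [gbr, scale, Pi.smul_apply, smul_eq_mul]; ring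

theorem eid_shear (t : R) (l : Fin 5 → Fin 2 → R) (k : Fin 6) : eid (shear t l) k = eid l k := by
  obtain ⟨h1, h2, h3⟩ := f_shA (-t) (nA (rootCoeffs l))
  simp only [eid, pI, dI, pq, dq, gbr_shear, nA_shear, h1, h2, h3]

theorem eid_swap (l : Fin 5 → Fin 2 → R) (k : Fin 6) : eid (swap l) k = eid l k := by
  obtain ⟨h1, h2, h3⟩ := f_rvA (nA (rootCoeffs l))
  simp only [eid, pI, dI, pq, dq, gbr_swap, nA_swap, h1, h2, h3, neg_mul_neg]

theorem pq_scale (c : Fin 5 → R) (l : Fin 5 → Fin 2 → R) (i j m n : Fin 5) :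
    pq (scale c l i) (scale c l j) (scale c l m) (scale c l n)
      = (c i * c j * c m * c n) ^ 2 * pq (l i) (l j) (l m) (l n) := by
  simp only [pq, gbr_scale]; ring

theorem dq_scale (c : Fin 5 → R) (l : Fin 5 → Fin 2 → R) (i j m n : Fin 5) :
    dq (scale c l i) (scale c l j) (scale c l m) (scale c l n)
      = (c i * c j * c m * c n) ^ 6 * dq (l i) (l j) (l m) (l n) := by
  simp only [dq, gbr_scale]; ring

theorem eid_scale (c : Fin 5 → R) (l : Fin 5 → Fin 2 → R) (k : Fin 6) :
    eid (scale c l) k = (c 0 * c 1 * c 2 * c 3 * c 4) ^ 24 * eid l k := by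
  obtain ⟨h1, h2, h3⟩ := f_smul (c 0 * c 1 * c 2 * c 3 * c 4) (nA (rootCoeffs l))
  rw [eid, eid, nA_scale, h1, h2, h3]
  generalize fJ (nA (rootCoeffs l)) = J
  generalize fK (nA (rootCoeffs l)) = K
  generalize fL (nA (rootCoeffs l)) = L
  have hb : bsum (pI (scale c l)) (dI (scale c l)) k
      = (c 0 * c 1 * c 2 * c 3 * c 4) ^ 24 * bsum (pI l) (dI l) k := by
    simp only [bsum, pI, dI, pq_scale, dq_scale, Matrix.cons_val]
    generalize pq (l 1) (l 2) (l 3) (l 4) = p0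
    generalize pq (l 0) (l 2) (l 3) (l 4) = p1
    generalize pq (l 0) (l 1) (l 3) (l 4) = p2
    generalize pq (l 0) (l 1) (l 2) (l 4) = p3
    generalize pq (l 0) (l 1) (l 2) (l 3) = p4
    generalize dq (l 1) (l 2) (l 3) (l 4) = d0
    generalize dq (l 0) (l 2) (l 3) (l 4) = d1
    generalize dq (l 0) (l 1) (l 3) (l 4) = d2
    generalize dq (l 0) (l 1) (l 2) (l 4) = d3
    generalize dq (l 0) (l 1) (l 2) (l 3) = d4
    fin_cases k <;> simp only [bq, Fin.reduceFinMk, Matrix.cons_val] <;> ring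
  have ht : ∀ m : R, tgt (m ^ 4 * J) (m ^ 8 * K) (m ^ 12 * L) k = m ^ 24 * tgt J K L k := by
    intro m
    fin_cases k <;> simp only [tgt, Fin.reduceFinMk, Matrix.cons_val] <;> ring
  rw [hb, ht]
  ring
end

/-- The formulas hold for five points in general position: a unimodular substitution moves the
points to `∞, 0, r, s, t` up to scalars. -/
theorem eid_generic (l : Fin 5 → Fin 2 → ℂ) (hx : l 0 0 ≠ 0)
    (h : ∀ i, i ≠ 0 → gbr (l 0) (l i) ≠ 0) (k : Fin 6) : eid l k = 0 := by
  -- move the first point to `∞`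
  set m := shear (-(l 0 1 / l 0 0)) l with hm
  have m01 : m 0 1 = 0 := by simp [hm, shear, hx]
  have m00 : m 0 0 = l 0 0 := by simp [hm, shear]
  have mi : ∀ i, i ≠ 0 → m i 1 ≠ 0 := by
    intro i hi h0
    apply h i hi
    rw [← gbr_shear (-(l 0 1 / l 0 0)), ← hm, gbr, m01, h0]; ring
  -- move the second point to `0`
  set n := swap (shear (-(m 1 0 / m 1 1)) (swap m)) with hn
  have n00 : n 0 0 = l 0 0 := by simp [hn, swap, shear, m01, m00]
  have n01 : n 0 1 = 0 := by simp [hn, swap, shear, m01]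
  have n10 : n 1 0 = 0 := by simp [hn, swap, shear, mi 1]
  have ni : ∀ i, n i 1 = m i 1 := by intro i; simp [hn, swap, shear]
  have hs : n = scale ![l 0 0, m 1 1, m 2 1, m 3 1, m 4 1]
      (canon (n 2 0 / m 2 1) (n 3 0 / m 3 1) (n 4 0 / m 4 1)) := by
    have h2 := mi 2 (by decide)
    have h3 := mi 3 (by decide)
    have h4 := mi 4 (by decide)
    funext i j
    fin_cases i <;> fin_cases j <;> simp [scale, canon, n00, n01, n10, ni] <;> field_simp
  have : eid n k = 0 := by rw [hs, eid_scale, eid_canon, mul_zero]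
  rwa [hn, eid_swap, eid_shear, eid_swap, hm, eid_shear] at this

/-! ### The formulas for arbitrary roots -/

theorem map_eid {R S : Type*} [CommRing R] [CommRing S] (f : R →+* S) (l : Fin 5 → Fin 2 → R)
    (k : Fin 6) : eid (fun i j => f (l i j)) k = f (eid l k) := by
  have hA : nA (rootCoeffs fun i j => f (l i j)) = fun i => f (nA (rootCoeffs l) i) := by
    funext i
    fin_cases i <;> simp [nA, rootCoeffs, map_ofNat]
  have hJ : ∀ A : Fin 6 → R, fJ (fun i => f (A i)) = f (fJ A) := by
    intro A; simp [map_ofNat, fJ, qi0, qi1, qi2]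
  have hK : ∀ A : Fin 6 → R, fK (fun i => f (A i)) = f (fK A) := by
    intro A; simp [map_ofNat, fK, qi0, qi1, qi2, hk0, hk1, hk2, hk3]
  have hL : ∀ A : Fin 6 → R, fL (fun i => f (A i)) = f (fL A) := by
    intro A; simp [map_ofNat, fL, hk0, hk1, hk2, hk3]
  have hp : ∀ a b c d : Fin 2 → R, pq (fun i => f (a i)) (fun i => f (b i)) (fun i => f (c i))
      (fun i => f (d i)) = f (pq a b c d) := by
    intros; simp [pq, gbr]
  have hd : ∀ a b c d : Fin 2 → R, dq (fun i => f (a i)) (fun i => f (b i)) (fun i => f (c i))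
      (fun i => f (d i)) = f (dq a b c d) := by
    intros; simp [dq, gbr]
  rw [eid, eid, hA, hJ, hK, hL]
  fin_cases k <;> simp [map_ofNat, cst, bsum, bq, tgt, pI, dI, hp, hd]

/-- The coefficients of `∏ᵢ (dᵢ + pᵢ³ z)` are polynomials in `J, K, L`: the general case
follows from `eid_generic` since both sides are polynomials. -/
theorem eid_eq_zero (l : Fin 5 → Fin 2 → ℂ) (k : Fin 6) : eid l k = 0 := by
  let x : Fin 5 → Fin 2 → MvPolynomial (Fin 5 × Fin 2) ℂ := fun i j => X (i, j)
  let Z : MvPolynomial (Fin 5 × Fin 2) ℂ :=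
    x 0 0 * (gbr (x 0) (x 1) * gbr (x 0) (x 2) * gbr (x 0) (x 3) * gbr (x 0) (x 4))
  have ev : ∀ v : Fin 5 × Fin 2 → ℂ, eval v Z = v (0, 0) *
      (gbr (fun j => v (0, j)) (fun j => v (1, j)) * gbr (fun j => v (0, j)) (fun j => v (2, j)) *
      gbr (fun j => v (0, j)) (fun j => v (3, j)) *
      gbr (fun j => v (0, j)) (fun j => v (4, j))) := by
    intro v; simp [Z, x, gbr]
  have ee : ∀ v : Fin 5 × Fin 2 → ℂ, eid (fun i j => v (i, j)) k = eval v (eid x k) := by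
    intro v; rw [← map_eid]; simp [x]
  have hZ : Z ≠ 0 := by
    intro h
    have := ev fun ij => if ij.1 = 0 then (if ij.2 = 0 then 1 else 0) else 1
    rw [h] at this
    simp [gbr] at this
  have h0 : Z * eid x k = 0 := by
    apply MvPolynomial.funext
    intro v
    rw [map_mul, map_zero, mul_eq_zero, or_iff_not_imp_left, ev, ← ee]
    intro hv
    simp only [mul_eq_zero, not_or] at hv
    refine eid_generic _ hv.1 (fun i hi => ?_) k
    fin_cases i
    · exact absurd rfl hi
    · exact hv.2.1.1.1
    · exact hv.2.1.1.2
    · exact hv.2.1.2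
    · exact hv.2.2
  have h1 := ee fun ij => l ij.1 ij.2
  rw [(mul_eq_zero.1 h0).resolve_left hZ, map_zero] at h1
  exact h1

theorem lin_mul_four (a b c d : Fin 2 → ℂ) : lin a * lin b * lin c * lin d =
    C (a 1 * b 1 * c 1 * d 1) * X 0 ^ 4 * X 1 ^ 0
    + C (-(a 0 * b 1 * c 1 * d 1 + a 1 * b 0 * c 1 * d 1 + a 1 * b 1 * c 0 * d 1
      + a 1 * b 1 * c 1 * d 0)) * X 0 ^ 3 * X 1 ^ 1
    + C (a 0 * b 0 * c 1 * d 1 + a 0 * b 1 * c 0 * d 1 + a 0 * b 1 * c 1 * d 0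
      + a 1 * b 0 * c 0 * d 1 + a 1 * b 0 * c 1 * d 0 + a 1 * b 1 * c 0 * d 0) * X 0 ^ 2 * X 1 ^ 2
    + C (-(a 1 * b 0 * c 0 * d 0 + a 0 * b 1 * c 0 * d 0 + a 0 * b 0 * c 1 * d 0
      + a 0 * b 0 * c 0 * d 1)) * X 0 ^ 1 * X 1 ^ 3
    + C (a 0 * b 0 * c 0 * d 0) * X 0 ^ 0 * X 1 ^ 4 := by
  simp only [lin, map_add, map_mul, map_neg]
  ring

theorem Sq_lin (a b c d : Fin 2 → ℂ) :
    Sq (lin a * lin b * lin c * lin d) = pq a b c d / 12 ∧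
    Sq (lin a * lin b * lin c * lin d) ^ 3 - 27 * Tq (lin a * lin b * lin c * lin d) ^ 2
      = dq a b c d / 256 := by
  have hadd : ∀ i j (F G : P2), mcoeff i j (F + G) = mcoeff i j F + mcoeff i j G :=
    fun i j F G => coeff_add _ _ _
  have hS : Sq (lin a * lin b * lin c * lin d) = pq a b c d / 12 := by
    simp only [lin_mul_four, Sq, hadd, mcoeff_mon]
    simp [pq, gbr]
    ring
  refine ⟨hS, ?_⟩
  have hT : Tq (lin a * lin b * lin c * lin d)
      = ((gbr a b * gbr c d - gbr a c * gbr d b) * (gbr a c * gbr d b - gbr a d * gbr b c)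
        * (gbr a d * gbr b c - gbr a b * gbr c d)) / 432 := by
    simp only [lin_mul_four, Tq, hadd, mcoeff_mon]
    simp [gbr]
    ring
  have hC : gbr a d * gbr b c = -(gbr a b * gbr c d) - gbr a c * gbr d b := by
    simp only [gbr]; ring
  rw [hS, hT, pq, dq, hC]
  ring

theorem quarticOmit_eq (l : Fin 5 → Fin 2 → ℂ) :
    quarticOmit l 0 = lin (l 1) * lin (l 2) * lin (l 3) * lin (l 4) ∧
    quarticOmit l 1 = lin (l 0) * lin (l 2) * lin (l 3) * lin (l 4) ∧
    quarticOmit l 2 = lin (l 0) * lin (l 1) * lin (l 3) * lin (l 4) ∧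
    quarticOmit l 3 = lin (l 0) * lin (l 1) * lin (l 2) * lin (l 4) ∧
    quarticOmit l 4 = lin (l 0) * lin (l 1) * lin (l 2) * lin (l 3) := by
  have e0 : (Finset.univ.erase 0 : Finset (Fin 5)) = {1, 2, 3, 4} := by decide
  have e1 : (Finset.univ.erase 1 : Finset (Fin 5)) = {0, 2, 3, 4} := by decide
  have e2 : (Finset.univ.erase 2 : Finset (Fin 5)) = {0, 1, 3, 4} := by decide
  have e3 : (Finset.univ.erase 3 : Finset (Fin 5)) = {0, 1, 2, 4} := by decide
  have e4 : (Finset.univ.erase 4 : Finset (Fin 5)) = {0, 1, 2, 3} := by decide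
  simp only [quarticOmit, e0, e1, e2, e3, e4]
  refine ⟨?_, ?_, ?_, ?_, ?_⟩ <;>
  · rw [Finset.prod_insert (by decide), Finset.prod_insert (by decide),
      Finset.prod_insert (by decide), Finset.prod_singleton]
    ring

theorem Binv_eq (l : Fin 5 → Fin 2 → ℂ) (k : Fin 6) :
    Binv l k = (-1) ^ (k : ℕ) / (1728 ^ (k : ℕ) * 256 ^ (5 - (k : ℕ))) * bsum (pI l) (dI l) k := by
  obtain ⟨h0, h1, h2, h3, h4⟩ := quarticOmit_eq l
  have e : Rbar l = ∑ k : Fin 6, Polynomial.C ((-1) ^ (k : ℕ)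
      / (1728 ^ (k : ℕ) * 256 ^ (5 - (k : ℕ))) * bsum (pI l) (dI l) k)
      * Polynomial.X ^ (5 - (k : ℕ)) := by
    have aux : ∀ p d : ℂ, Polynomial.C (d / 256) * Polynomial.X - Polynomial.C ((p / 12) ^ 3)
        = Polynomial.C (1 / 256) * Polynomial.C d * Polynomial.X
          - Polynomial.C (1 / 1728) * Polynomial.C p ^ 3 := by
      intro p d
      rw [← map_mul, ← map_pow, ← map_mul]
      congr 3 <;> ring
    simp only [Rbar, Fin.prod_univ_five, h0, h1, h2, h3, h4]
    rw [(Sq_lin (l 1) _ _ _).2, (Sq_lin _ (l 2) _ _).2, (Sq_lin _ _ (l 3) _).2,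
      (Sq_lin _ _ _ (l 4)).2, (Sq_lin _ _ _ (l 3)).2]
    simp only [(Sq_lin _ _ _ _).1, aux, Fin.sum_univ_six, bsum, bq, pI, dI, Matrix.cons_val]
    generalize pq (l 1) (l 2) (l 3) (l 4) = p0
    generalize pq (l 0) (l 2) (l 3) (l 4) = p1
    generalize pq (l 0) (l 1) (l 3) (l 4) = p2
    generalize pq (l 0) (l 1) (l 2) (l 4) = p3
    generalize pq (l 0) (l 1) (l 2) (l 3) = p4
    generalize dq (l 1) (l 2) (l 3) (l 4) = d0
    generalize dq (l 0) (l 2) (l 3) (l 4) = d1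
    generalize dq (l 0) (l 1) (l 3) (l 4) = d2
    generalize dq (l 0) (l 1) (l 2) (l 4) = d3
    generalize dq (l 0) (l 1) (l 2) (l 3) = d4
    have hc : ∀ m n : ℕ, (-1 : ℂ) ^ m / (1728 ^ m * 256 ^ n)
        = (-1) ^ m * (1 / 1728) ^ m * (1 / 256) ^ n := by
      intro m n; rw [div_eq_mul_inv, mul_inv]; simp [mul_assoc]
    simp only [hc, map_mul, map_add, map_pow, map_neg, map_one]
    generalize Polynomial.C (1 / 256 : ℂ) = u
    generalize Polynomial.C (1 / 1728 : ℂ) = w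
    simp
    ring
  rw [Binv, e, Polynomial.finsetSum_coeff]
  simp only [Polynomial.coeff_C_mul_X_pow]
  rw [Finset.sum_eq_single k]
  · simp
  · intro j _ hj
    rw [if_neg]
    intro h
    apply hj
    ext
    omega
  · simp

/-! ### The algebra generated by the `Bᵢ` -/

section
variable {A : Type*} [CommRing A] [Algebra ℂ A] (S : Subalgebra ℂ A)

theorem mem_of_natCast_mul_mem (N : ℕ) (hN : N ≠ 0) {x : A} (h : (N : A) * x ∈ S) : x ∈ S := by
  have : x = (N : ℂ)⁻¹ • ((N : A) * x) := by
    rw [← nsmul_eq_mul, ← Nat.cast_smul_eq_nsmul ℂ, smul_smul, inv_mul_cancel₀, one_smul]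
    exact Nat.cast_ne_zero.2 hN
  rw [this]
  exact S.smul_mem h _

theorem val_mem (x : S) : S.val x ∈ S := x.2

/-- The monomials of weight `6` other than `l²`, with `j, k, l` of weights `1, 2, 3`. -/
def m6 (j k l : A) : Fin 6 → A := ![j ^ 6, j ^ 4 * k, j ^ 2 * k ^ 2, k ^ 3, j ^ 3 * l, j * k * l]

/-- The six combinations `14 m + c l²` of monomials of weight `6`; they span the same space as the
six elements `tgt (16 j) (2 k) l`. -/
def w6 (j k l : A) : Fin 6 → A :=
  ![14 * j ^ 6 + 9 * l ^ 2, 14 * (j ^ 4 * k) + 134 * l ^ 2, 14 * (j ^ 2 * k ^ 2) + 259 * l ^ 2,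
    14 * k ^ 3 + 384 * l ^ 2, 14 * (j ^ 3 * l) - 307 * l ^ 2, 14 * (j * k * l) - 57 * l ^ 2]

variable {S} {j k l : A}

/-- The combinations of the `tgt (16 j) (2 k) l` are found by inverting the `6 × 6` matrix of their
coefficients modulo `l²`. -/
theorem w6_mem (h : ∀ i, tgt (16 * j) (2 * k) l i ∈ S) (i : Fin 6) : w6 j k l i ∈ S := by
  let t : Fin 6 → S := fun i => ⟨_, h i⟩
  have ht : ∀ i, S.val (t i) = tgt (16 * j) (2 * k) l i := fun i => rfl
  fin_cases i
  · refine mem_of_natCast_mul_mem S 655360000000 (by norm_num) ?_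
    have := val_mem S (-491877 * t 0 + 2950560 * t 1 - 3663360 * t 2 + 4608000 * t 3
        - 1474560 * t 4 + 2097152 * t 5)
    simp only [map_add, map_sub, map_mul, map_neg, map_ofNat] at this
    convert this using 1
    simp only [ht, tgt, w6, Fin.zero_eta, Matrix.cons_val]
    ring
  · refine mem_of_natCast_mul_mem S 20480000000 (by norm_num) ?_
    have := val_mem S (-228971 * t 0 + 1373355 * t 1 - 1704480 * t 2 + 2144000 * t 3
        - 686080 * t 4 + 720896 * t 5)
    simp only [map_add, map_sub, map_mul, map_neg, map_ofNat] at this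
    convert this using 1
    simp only [ht, tgt, w6, Fin.mk_one, Matrix.cons_val]
    ring
  · refine mem_of_natCast_mul_mem S 5120000000 (by norm_num) ?_
    have := val_mem S (-111839 * t 0 + 669095 * t 1 - 823620 * t 2 + 1036000 * t 3 - 331520 * t 4
        + 344064 * t 5)
    simp only [map_add, map_sub, map_mul, map_neg, map_ofNat] at this
    convert this using 1
    simp only [ht, tgt, w6, Fin.reduceFinMk, Matrix.cons_val]
    ring
  · refine mem_of_natCast_mul_mem S 40000000 (by norm_num) ?_
    have := val_mem S (-1343 * t 0 + 7815 * t 1 - 9540 * t 2 + 12000 * t 3 - 3840 * t 4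
        + 3968 * t 5)
    simp only [map_add, map_sub, map_mul, map_neg, map_ofNat] at this
    convert this using 1
    simp only [ht, tgt, w6, Fin.reduceFinMk, Matrix.cons_val]
    ring
  · refine mem_of_natCast_mul_mem S 10240000000 (by norm_num) ?_
    have := val_mem S (262657 * t 0 - 1574585 * t 1 + 1951260 * t 2 - 2456000 * t 3
        + 776960 * t 4 - 786432 * t 5)
    simp only [map_add, map_sub, map_mul, map_ofNat] at this
    convert this using 1
    simp only [ht, tgt, w6, Fin.reduceFinMk, Matrix.cons_val]
    ring
  · refine mem_of_natCast_mul_mem S 5120000000 (by norm_num) ?_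
    have := val_mem S (26511 * t 0 - 157655 * t 1 + 189380 * t 2 - 228000 * t 3 + 68480 * t 4
        - 65536 * t 5)
    simp only [map_add, map_sub, map_mul, map_ofNat] at this
    convert this using 1
    simp only [ht, tgt, w6, Fin.reduceFinMk, Matrix.cons_val]
    ring

/-- Although `l²` itself need not lie in `S`, all its products with monomials of weight `6` do: they
are linear combinations of products of two of the `w6`, since the monomials of weight `12` factor in
several ways into two monomials of weight `6`. -/
theorem sq_mul_mem (h : ∀ i, tgt (16 * j) (2 * k) l i ∈ S) :
    l ^ 2 * l ^ 2 ∈ S ∧ ∀ i, l ^ 2 * m6 j k l i ∈ S := by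
  let w : Fin 6 → S := fun i => ⟨_, w6_mem h i⟩
  have hw : ∀ i, S.val (w i) = w6 j k l i := fun i => rfl
  constructor
  · refine mem_of_natCast_mul_mem S 68359375 (by norm_num) ?_
    have := val_mem S (49 * (w 0 * w 2) - 399 * (w 0 * w 5) - 49 * (w 1 * w 1) + 399 * (w 1 * w 4) +
        2149 * (w 1 * w 5) - 2149 * (w 2 * w 4) - 2531 * (w 4 * w 4) + 18437 * (w 4 * w
        5) - 47156 * (w 5 * w 5))
    simp only [map_add, map_sub, map_mul, map_ofNat] at this
    convert this using 1
    simp only [hw, w6, Matrix.cons_val]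
    ring
  · intro i
    fin_cases i
    · refine mem_of_natCast_mul_mem S 3828125000 (by norm_num) ?_
      have := val_mem S (1319486 * (w 0 * w 2) + 1151864 * (w 0 * w 5) - 1319486 * (w 1 * w 1)
        - 1151864 *
          (w 1 * w 4) - 77364 * (w 1 * w 5) + 77364 * (w 2 * w 4) - 189509 * (w 4 * w 4) -
          314982 * (w 4 * w 5) + 848241 * (w 5 * w 5))
      simp only [map_add, map_sub, map_mul, map_ofNat] at this
      convert this using 1
      simp only [hw, w6, m6, Fin.zero_eta, Matrix.cons_val]
      ring
    · refine mem_of_natCast_mul_mem S 1914062500 (by norm_num) ?_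
      have := val_mem S (122493 * (w 0 * w 2) + 610057 * (w 0 * w 5) - 122493 * (w 1 * w 1)
        - 610057 * (w
          1 * w 4) - 291557 * (w 1 * w 5) + 291557 * (w 2 * w 4) + 217683 * (w 4 * w 4) -
          2454241 * (w 4 * w 5) + 6314683 * (w 5 * w 5))
      simp only [map_add, map_sub, map_mul, map_ofNat] at this
      convert this using 1
      simp only [hw, w6, m6, Fin.mk_one, Matrix.cons_val]
      ring
    · refine mem_of_natCast_mul_mem S 546875000 (by norm_num) ?_
      have := val_mem S (6498 * (w 0 * w 2) + 59052 * (w 0 * w 5) - 6498 * (w 1 * w 1)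
        - 59052 * (w 1 * w
          4) - 30552 * (w 1 * w 5) + 30552 * (w 2 * w 4) + 120213 * (w 4 * w 4) - 1294926 *
          (w 4 * w 5) + 3455963 * (w 5 * w 5))
      simp only [map_add, map_sub, map_mul, map_ofNat] at this
      convert this using 1
      simp only [hw, w6, m6, Fin.reduceFinMk, Matrix.cons_val]
      ring
    · refine mem_of_natCast_mul_mem S 42109375000 (by norm_num) ?_
      have := val_mem S (3243982 * (w 0 * w 5) + 370386 * (w 1 * w 3) - 3243982 * (w 1 * w 4)
        - 15497750 *
          (w 1 * w 5) - 370386 * (w 2 * w 2) + 15497750 * (w 2 * w 4) + 9635768 * (w 2 * w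
          5) - 9635768 * (w 3 * w 4) + 13207641 * (w 4 * w 4) - 144393032 * (w 4 * w 5) +
          392779141 * (w 5 * w 5))
      simp only [map_add, map_sub, map_mul, map_ofNat] at this
      convert this using 1
      simp only [hw, w6, m6, Fin.reduceFinMk, Matrix.cons_val]
      ring
    · refine mem_of_natCast_mul_mem S 3828125000 (by norm_num) ?_
      have := val_mem S (60172 * (w 0 * w 2) - 218722 * (w 0 * w 5) - 60172 * (w 1 * w 1)
        + 218722 * (w 1
          * w 4) + 1317722 * (w 1 * w 5) - 1317722 * (w 2 * w 4) - 2003693 * (w 4 * w 4) +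
          11313136 * (w 4 * w 5) - 28934443 * (w 5 * w 5))
      simp only [map_add, map_sub, map_mul, map_ofNat] at this
      convert this using 1
      simp only [hw, w6, m6, Fin.reduceFinMk, Matrix.cons_val]
      ring
    · refine mem_of_natCast_mul_mem S 3828125000 (by norm_num) ?_
      have := val_mem S (11172 * (w 0 * w 2) + 5278 * (w 0 * w 5) - 11172 * (w 1 * w 1)
        - 5278 * (w 1 * w
          4) + 218722 * (w 1 * w 5) - 218722 * (w 2 * w 4) - 185193 * (w 4 * w 4) + 988636
          * (w 4 * w 5) - 4803443 * (w 5 * w 5))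
      simp only [map_add, map_sub, map_mul, map_ofNat] at this
      convert this using 1
      simp only [hw, w6, m6, Fin.reduceFinMk, Matrix.cons_val]
      ring

theorem m6_mul_mem (h : ∀ i, tgt (16 * j) (2 * k) l i ∈ S) (i i' : Fin 6) :
    m6 j k l i * m6 j k l i' ∈ S := by
  obtain ⟨h4, h2⟩ := sq_mul_mem h
  have hw : ∀ i, ∃ c : ℤ, 14 * m6 j k l i + c * l ^ 2 ∈ S := by
    intro i
    refine ⟨![9, 134, 259, 384, -307, -57] i, ?_⟩
    convert w6_mem h i using 1
    fin_cases i <;> simp [m6, w6, sub_eq_add_neg]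
  obtain ⟨c, hc⟩ := hw i
  obtain ⟨c', hc'⟩ := hw i'
  refine mem_of_natCast_mul_mem S 196 (by norm_num) ?_
  let x : S := ⟨_, hc⟩
  let y : S := ⟨_, hc'⟩
  let z : S := ⟨_, h2 i⟩
  let z' : S := ⟨_, h2 i'⟩
  let v : S := ⟨_, h4⟩
  have := val_mem S (x * y - 14 * c * z' - 14 * c' * z - c * c' * v)
  simp only [map_sub, map_mul, map_ofNat, map_intCast] at this
  convert this using 1
  simp only [x, y, z, z', v, Subalgebra.val_apply]
  ring

theorem mon12_mem (h : ∀ i, tgt (16 * j) (2 * k) l i ∈ S) (a b c : ℕ)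
    (e : a + 2 * b + 3 * c = 12) : j ^ a * k ^ b * l ^ c ∈ S := by
  obtain ⟨h4, h2⟩ := sq_mul_mem h
  have hm := m6_mul_mem h
  have hc : c ≤ 4 := by omega
  have cv : ∀ {x y : A}, x ∈ S → y = x → y ∈ S := fun hx e => e ▸ hx
  obtain rfl : a = 12 - 2 * b - 3 * c := by omega
  interval_cases c
  · have hb : b ≤ 6 := by omega
    interval_cases b
    · exact cv (hm 0 0) (by simp only [m6, Matrix.cons_val]; ring)
    · exact cv (hm 0 1) (by simp only [m6, Matrix.cons_val]; ring)
    · exact cv (hm 0 2) (by simp only [m6, Matrix.cons_val]; ring)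
    · exact cv (hm 0 3) (by simp only [m6, Matrix.cons_val]; ring)
    · exact cv (hm 1 3) (by simp only [m6, Matrix.cons_val]; ring)
    · exact cv (hm 2 3) (by simp only [m6, Matrix.cons_val]; ring)
    · exact cv (hm 3 3) (by simp only [m6, Matrix.cons_val]; ring)
  · have hb : b ≤ 4 := by omega
    interval_cases b
    · exact cv (hm 0 4) (by simp only [m6, Matrix.cons_val]; ring)
    · exact cv (hm 0 5) (by simp only [m6, Matrix.cons_val]; ring)
    · exact cv (hm 1 5) (by simp only [m6, Matrix.cons_val]; ring)
    · exact cv (hm 2 5) (by simp only [m6, Matrix.cons_val]; ring)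
    · exact cv (hm 3 5) (by simp only [m6, Matrix.cons_val]; ring)
  · have hb : b ≤ 3 := by omega
    interval_cases b
    · exact cv (h2 0) (by simp only [m6, Matrix.cons_val]; ring)
    · exact cv (h2 1) (by simp only [m6, Matrix.cons_val]; ring)
    · exact cv (h2 2) (by simp only [m6, Matrix.cons_val]; ring)
    · exact cv (h2 3) (by simp only [m6, Matrix.cons_val]; ring)
  · have hb : b ≤ 1 := by omega
    interval_cases b
    · exact cv (h2 4) (by simp only [m6, Matrix.cons_val]; ring)
    · exact cv (h2 5) (by simp only [m6, Matrix.cons_val]; ring)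
  · have hb : b ≤ 0 := by omega
    interval_cases b
    · exact cv h4 (by ring)

/-- Every monomial whose weight is a multiple of `12` is a product of monomials of weight `12`. -/
theorem mon_mem (h : ∀ i, tgt (16 * j) (2 * k) l i ∈ S) (n : ℕ) :
    ∀ a b c : ℕ, a + 2 * b + 3 * c = 12 * n → j ^ a * k ^ b * l ^ c ∈ S := by
  induction n with
  | zero =>
    intro a b c e
    obtain rfl : a = 0 := by omega
    obtain rfl : b = 0 := by omega
    obtain rfl : c = 0 := by omega
    simp
  | succ n ih =>
    intro a b c e
    -- split off a monomial of weight `12`, taking as many factors `l`, then `k`, as possible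
    obtain ⟨a', b', c', a'', b'', c'', rfl, rfl, rfl, e'⟩ : ∃ a' b' c' a'' b'' c'' : ℕ,
        a = a' + a'' ∧ b = b' + b'' ∧ c = c' + c'' ∧ a' + 2 * b' + 3 * c' = 12 := by
      rcases le_or_gt 4 c with hc | hc
      · exact ⟨0, 0, 4, a, b, c - 4, by omega, by omega, by omega, by omega⟩
      · rcases le_or_gt b ((12 - 3 * c) / 2) with hb | hb
        · exact ⟨12 - 3 * c - 2 * b, b, c, a - (12 - 3 * c - 2 * b), 0, 0, by omega, by omega,
            by omega, by omega⟩
        · exact ⟨(12 - 3 * c) % 2, (12 - 3 * c) / 2, c, a - (12 - 3 * c) % 2,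
            b - (12 - 3 * c) / 2, 0, by omega, by omega, by omega, by omega⟩
    have := S.mul_mem (mon12_mem h a' b' c' e') (ih a'' b'' c'' (by omega))
    convert this using 1
    ring
end

/-! ### Conclusion -/

theorem nA_eq_smul_nrm (a : Fin 6 → ℂ) : nA a = (10 : ℂ) • nrm a := by
  funext i
  fin_cases i <;> simp [nA, nrm, Nat.choose] <;> ring

theorem tgt_apply {X : Type*} (J K L : X → ℂ) (i : Fin 6) (x : X) :
    tgt J K L i x = tgt (J x) (K x) (L x) i := by
  fin_cases i <;> simp [tgt]

/-- For every degree `d > 0` divisible by `48`, every `SL₂(ℂ)`-invariant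
homogeneous polynomial of degree `d` in the coefficients of the binary quintic is
a polynomial in `B₀,…,B₅`. -/
theorem invariants_are_polynomials_in_binv (d : ℕ) (hd : 0 < d) (hdvd : 48 ∣ d)
    (P : MvPolynomial (Fin 6) ℂ) (hP : P.IsHomogeneous d) (hinv : IsInvariantPoly P) :
    ∃ Φ : MvPolynomial (Fin 6) ℂ, ∀ l : Fin 5 → Fin 2 → ℂ,
      MvPolynomial.eval (qcoeffs (quinticOf l)) P
        = MvPolynomial.eval (fun i : Fin 6 => Binv l (i : ℕ)) Φ := by
  obtain ⟨n, rfl⟩ := hdvd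
  obtain ⟨Q, hQ, hPQ⟩ := inv_eq_JKL hP ⟨12 * n, by ring⟩ hinv
  -- the algebra of functions of the roots, and the subalgebra generated by the `Bᵢ`
  let A := (Fin 5 → Fin 2 → ℂ) → ℂ
  let B : Fin 6 → A := fun i l => Binv l (i : ℕ)
  let S : Subalgebra ℂ A := (aeval (R := ℂ) B).range
  have hBS : ∀ i, B i ∈ S := fun i => ⟨X i, by simp⟩
  let f : Fin 3 → A := fun i l => jkl (nrm (rootCoeffs l)) i
  -- the factors make up for the normalisations in `nA` and in `tgt (16 j) (2 k) l`
  have ht : ∀ i, tgt (16 * ((625 : ℂ) • f 0)) (2 * ((50000000 : ℂ) • f 1))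
      ((1000000000000 : ℂ) • f 2) i ∈ S := by
    intro i
    have : tgt (16 * ((625 : ℂ) • f 0)) (2 * ((50000000 : ℂ) • f 1))
        ((1000000000000 : ℂ) • f 2) i
        = (cst i * ((-1) ^ (i : ℕ) / (1728 ^ (i : ℕ) * 256 ^ (5 - (i : ℕ))))⁻¹ : ℂ) • B i := by
      funext l
      have e := eid_eq_zero l i
      rw [eid, nA_eq_smul_nrm] at e
      obtain ⟨h1, h2, h3⟩ := f_smul (10 : ℂ) (nrm (rootCoeffs l))
      rw [h1, h2, h3, sub_eq_zero] at e
      have h0 : ((-1) ^ (i : ℕ) / (1728 ^ (i : ℕ) * 256 ^ (5 - (i : ℕ))) : ℂ) ≠ 0 := by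
        simp
      rw [Pi.smul_apply, smul_eq_mul]
      simp only [B]
      rw [Binv_eq, mul_assoc, inv_mul_cancel_left₀ h0, e]
      refine (tgt_apply _ _ _ i l).trans ?_
      congr 1
      · change 16 * (625 * fJ (nrm (rootCoeffs l))) = _
        ring
      · change 2 * (50000000 * fK (nrm (rootCoeffs l))) = _
        ring
      · change 1000000000000 * fL (nrm (rootCoeffs l)) = _
        ring
    rw [this]
    exact S.smul_mem (hBS i) _
  have hf : aeval f Q ∈ S := by
    rw [aeval_def, eval₂_eq']
    refine S.sum_mem fun m hm => S.mul_mem (S.algebraMap_mem _) ?_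
    have hw := hQ (mem_support_iff.1 hm)
    rw [Finsupp.weight_apply, Finsupp.sum_fintype _ _ (by simp), Fin.sum_univ_three] at hw
    simp at hw
    have := mon_mem ht n (m 0) (m 1) (m 2) (by omega)
    rw [Fin.prod_univ_three]
    simp only [smul_pow, smul_mul_smul_comm] at this
    have h0 : ((625 : ℂ) ^ m 0 * 50000000 ^ m 1 * 1000000000000 ^ m 2) ≠ 0 := by
      simp
    have h1 := S.smul_mem this (625 ^ m 0 * 50000000 ^ m 1 * 1000000000000 ^ m 2 : ℂ)⁻¹
    rwa [smul_smul, inv_mul_cancel₀ h0, one_smul] at h1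
  obtain ⟨Φ, hΦ⟩ := hf
  refine ⟨Φ, fun l => ?_⟩
  have ev : ∀ {ι : Type} (g : ι → A) (p : MvPolynomial ι ℂ),
      aeval g p l = eval (fun i => g i l) p := by
    intro ι g p
    exact comp_aeval_apply g (Pi.evalAlgHom ℂ (fun _ : Fin 5 → Fin 2 → ℂ => ℂ) l) p
  have h := congrFun hΦ l
  rw [qcoeffs_quinticOf, hPQ]
  refine (ev f Q).symm.trans (h.symm.trans (ev B Φ))

end
end

section
/- For every binary quintic F over ℂ, the invariants J, K, L, H of F satisfy the relation 16H² = −432L³ − 72L²KJ + 8LK³ − 2LK²J² + L²J³ + K⁴J. -/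
/-!
Up to constants, `J` and `L` are the discriminants of the quadratic covariants `C₁` and `C₃`, and
`K` is their joint invariant. Likewise `H` is the Jacobian of `C₁` and `C₃`
evaluated at the root `ρ` of the linear covariant `C₄`. The square of a Jacobian of two quadratics is a
quadratic polynomial in their values (`jacobian_sq`), which gives
`9216 · 16 H² = J N² + 8 K M N − 48 L M²` with `M = C₁(ρ)` and `N = C₃(ρ)`.

It remains to know `M` and `N`. The identity `N = −96 L J − 32 K²` holds for any cubic `C₂` and
quadratic `C₁` (`hessian_at_root`), while `M = −288 L − 32 J K` uses that both are covariants of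
one quintic (`cov1_at_root`). Substituting yields the relation. Splitting the degree `36` identity
in this way leaves small identities in the coefficients of the covariants and a single one of
degree `12` in the six coefficients of the quintic.
-/

noncomputable section

open MvPolynomial

/-! ### Binary forms in coordinates -/

/-- The binary linear form with coefficients `u₀, u₁`. -/
def form1 (u₀ u₁ : ℂ) : P2 := C u₀ * X 0 + C u₁ * X 1

/-- The binary quadratic form `b₀x₁² + b₁x₁x₂ + b₂x₂²` (no binomial factor on `b₁`). -/
def form2 (b₀ b₁ b₂ : ℂ) : P2 := C b₀ * X 0 ^ 2 + C b₁ * (X 0 * X 1) + C b₂ * X 1 ^ 2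

/-- The binary cubic with binomially normalised coefficients
`c₀x₁³ + 3c₁x₁²x₂ + 3c₂x₁x₂² + c₃x₂³`. -/
def form3 (c₀ c₁ c₂ c₃ : ℂ) : P2 :=
  C c₀ * X 0 ^ 3 + C (3 * c₁) * (X 0 ^ 2 * X 1) + C (3 * c₂) * (X 0 * X 1 ^ 2) + C c₃ * X 1 ^ 3

/-- The binary quintic with binomially normalised coefficients `A₀,…,A₅`. -/
def form5 (A₀ A₁ A₂ A₃ A₄ A₅ : ℂ) : P2 :=
  C A₀ * X 0 ^ 5 + C (5 * A₁) * (X 0 ^ 4 * X 1) + C (10 * A₂) * (X 0 ^ 3 * X 1 ^ 2)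
    + C (10 * A₃) * (X 0 ^ 2 * X 1 ^ 3) + C (5 * A₄) * (X 0 * X 1 ^ 4) + C A₅ * X 1 ^ 5

theorem formOf_eq (a : Fin 6 → ℂ) :
    formOf a = form5 (a 0) (a 1 / 5) (a 2 / 10) (a 3 / 10) (a 4 / 5) (a 5) := by
  apply MvPolynomial.funext
  intro x
  simp [formOf, form5, Fin.sum_univ_six]
  ring

/-! ### Transvectants in coordinates

Each formula is proved by carrying out the differentiations and comparing values at every
point of `ℂ²`. -/

theorem pd_add (i : Fin 2) (p q : P2) : pd i (p + q) = pd i p + pd i q := by simp [pd]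

theorem pd_C_mul (i : Fin 2) (c : ℂ) (p : P2) : pd i (C c * p) = C c * pd i p := by
  simp [pd]

/-- The derivative of a monomial; at `m = 0` the truncated exponent is harmless because the
coefficient vanishes. -/
theorem pd_zero_mono (m n : ℕ) :
    pd 0 (X 0 ^ m * X 1 ^ n) = C (m : ℂ) * (X 0 ^ (m - 1) * X 1 ^ n) := by
  simp [pd, pderiv_X]
  ring

theorem pd_one_mono (m n : ℕ) :
    pd 1 (X 0 ^ m * X 1 ^ n) = C (n : ℂ) * (X 0 ^ m * X 1 ^ (n - 1)) := by
  simp [pd, pderiv_X]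
  ring

theorem form1_mono (u₀ u₁ : ℂ) :
    form1 u₀ u₁ = C u₀ * (X 0 ^ 1 * X 1 ^ 0) + C u₁ * (X 0 ^ 0 * X 1 ^ 1) := by
  simp [form1]

theorem form2_mono (b₀ b₁ b₂ : ℂ) :
    form2 b₀ b₁ b₂ = C b₀ * (X 0 ^ 2 * X 1 ^ 0) + C b₁ * (X 0 ^ 1 * X 1 ^ 1)
      + C b₂ * (X 0 ^ 0 * X 1 ^ 2) := by
  simp [form2]

theorem form3_mono (c₀ c₁ c₂ c₃ : ℂ) :
    form3 c₀ c₁ c₂ c₃ = C c₀ * (X 0 ^ 3 * X 1 ^ 0) + C (3 * c₁) * (X 0 ^ 2 * X 1 ^ 1)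
      + C (3 * c₂) * (X 0 ^ 1 * X 1 ^ 2) + C c₃ * (X 0 ^ 0 * X 1 ^ 3) := by
  simp [form3]

theorem form5_mono (A₀ A₁ A₂ A₃ A₄ A₅ : ℂ) :
    form5 A₀ A₁ A₂ A₃ A₄ A₅ = C A₀ * (X 0 ^ 5 * X 1 ^ 0) + C (5 * A₁) * (X 0 ^ 4 * X 1 ^ 1)
      + C (10 * A₂) * (X 0 ^ 3 * X 1 ^ 2) + C (10 * A₃) * (X 0 ^ 2 * X 1 ^ 3)
      + C (5 * A₄) * (X 0 ^ 1 * X 1 ^ 4) + C A₅ * (X 0 ^ 0 * X 1 ^ 5) := by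
  simp [form5]

theorem transv_554 (A₀ A₁ A₂ A₃ A₄ A₅ : ℂ) :
    transv 5 5 4 (form5 A₀ A₁ A₂ A₃ A₄ A₅) (form5 A₀ A₁ A₂ A₃ A₄ A₅)
      = form2 (2 * (A₀ * A₄ - 4 * A₁ * A₃ + 3 * A₂ ^ 2)) (2 * (A₀ * A₅ - 3 * A₁ * A₄ + 2 * A₂ * A₃))
          (2 * (A₁ * A₅ - 4 * A₂ * A₄ + 3 * A₃ ^ 2)) := by
  simp only [transv, form5_mono, Finset.sum_range_succ, Finset.sum_range_zero,
    Function.iterate_succ_apply, Function.iterate_zero, id_eq,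
    pd_add, pd_C_mul, pd_zero_mono, pd_one_mono, Nat.reduceSub, Nat.reduceAdd]
  apply MvPolynomial.funext
  intro x
  simp [Nat.factorial, Nat.choose, form2]
  ring

theorem transv_522 (A₀ A₁ A₂ A₃ A₄ A₅ b₀ b₁ b₂ : ℂ) :
    transv 5 2 2 (form5 A₀ A₁ A₂ A₃ A₄ A₅) (form2 b₀ b₁ b₂)
      = form3 (A₀ * b₂ - A₁ * b₁ + A₂ * b₀) (A₁ * b₂ - A₂ * b₁ + A₃ * b₀)
          (A₂ * b₂ - A₃ * b₁ + A₄ * b₀) (A₃ * b₂ - A₄ * b₁ + A₅ * b₀) := by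
  simp only [transv, form5_mono, form2_mono, Finset.sum_range_succ, Finset.sum_range_zero,
    Function.iterate_succ_apply, Function.iterate_zero, id_eq,
    pd_add, pd_C_mul, pd_zero_mono, pd_one_mono, Nat.reduceSub, Nat.reduceAdd]
  apply MvPolynomial.funext
  intro x
  simp [Nat.factorial, Nat.choose, form3]
  ring

theorem transv_332 (c₀ c₁ c₂ c₃ : ℂ) :
    transv 3 3 2 (form3 c₀ c₁ c₂ c₃) (form3 c₀ c₁ c₂ c₃)
      = form2 (2 * (c₀ * c₂ - c₁ ^ 2)) (2 * (c₀ * c₃ - c₁ * c₂)) (2 * (c₁ * c₃ - c₂ ^ 2)) := by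
  simp only [transv, form3_mono, Finset.sum_range_succ, Finset.sum_range_zero,
    Function.iterate_succ_apply, Function.iterate_zero, id_eq,
    pd_add, pd_C_mul, pd_zero_mono, pd_one_mono, Nat.reduceSub, Nat.reduceAdd]
  apply MvPolynomial.funext
  intro x
  simp [Nat.factorial, Nat.choose, form2]
  ring

theorem transv_322 (c₀ c₁ c₂ c₃ b₀ b₁ b₂ : ℂ) :
    transv 3 2 2 (form3 c₀ c₁ c₂ c₃) (form2 b₀ b₁ b₂)
      = form1 (c₀ * b₂ - c₁ * b₁ + c₂ * b₀) (c₁ * b₂ - c₂ * b₁ + c₃ * b₀) := by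
  simp only [transv, form3_mono, form2_mono, Finset.sum_range_succ, Finset.sum_range_zero,
    Function.iterate_succ_apply, Function.iterate_zero, id_eq,
    pd_add, pd_C_mul, pd_zero_mono, pd_one_mono, Nat.reduceSub, Nat.reduceAdd]
  apply MvPolynomial.funext
  intro x
  simp [Nat.factorial, Nat.choose, form1]
  ring

theorem transv_222 (b₀ b₁ b₂ d₀ d₁ d₂ : ℂ) :
    transv 2 2 2 (form2 b₀ b₁ b₂) (form2 d₀ d₁ d₂)
      = C (b₀ * d₂ - b₁ * d₁ / 2 + b₂ * d₀) := by
  simp only [transv, form2_mono, Finset.sum_range_succ, Finset.sum_range_zero,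
    Function.iterate_succ_apply, Function.iterate_zero, id_eq,
    pd_add, pd_C_mul, pd_zero_mono, pd_one_mono, Nat.reduceSub, Nat.reduceAdd]
  apply MvPolynomial.funext
  intro x
  simp [Nat.factorial, Nat.choose]
  ring

theorem transv_121 (u₀ u₁ d₀ d₁ d₂ : ℂ) :
    transv 1 2 1 (form1 u₀ u₁) (form2 d₀ d₁ d₂)
      = form1 (u₀ * d₁ / 2 - u₁ * d₀) (u₀ * d₂ - u₁ * d₁ / 2) := by
  simp only [transv, form1_mono, form2_mono, Finset.sum_range_succ, Finset.sum_range_zero,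
    Function.iterate_succ_apply, Function.iterate_zero, id_eq,
    pd_add, pd_C_mul, pd_zero_mono, pd_one_mono, Nat.reduceSub, Nat.reduceAdd]
  apply MvPolynomial.funext
  intro x
  simp [Nat.factorial, Nat.choose]
  ring

theorem transv_211 (b₀ b₁ b₂ u₀ u₁ : ℂ) :
    transv 2 1 1 (form2 b₀ b₁ b₂) (form1 u₀ u₁)
      = form1 (b₀ * u₁ - b₁ * u₀ / 2) (b₁ * u₁ / 2 - b₂ * u₀) := by
  simp only [transv, form1_mono, form2_mono, Finset.sum_range_succ, Finset.sum_range_zero,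
    Function.iterate_succ_apply, Function.iterate_zero, id_eq,
    pd_add, pd_C_mul, pd_zero_mono, pd_one_mono, Nat.reduceSub, Nat.reduceAdd]
  apply MvPolynomial.funext
  intro x
  simp [Nat.factorial, Nat.choose]
  ring

theorem transv_111 (u₀ u₁ v₀ v₁ : ℂ) :
    transv 1 1 1 (form1 u₀ u₁) (form1 v₀ v₁)
      = C (u₀ * v₁ - u₁ * v₀) := by
  simp only [transv, form1_mono, Finset.sum_range_succ, Finset.sum_range_zero,
    Function.iterate_succ_apply, Function.iterate_zero, id_eq,
    pd_add, pd_C_mul, pd_zero_mono, pd_one_mono, Nat.reduceSub, Nat.reduceAdd]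
  apply MvPolynomial.funext
  intro x
  simp [Nat.factorial, Nat.choose]
  ring

/-! ### The syzygies -/

/-- The square of the Jacobian of two binary quadratics `b`, `d`, here evaluated at the root
`(-u₁, u₀)` of the linear form `u`, is a quadratic polynomial in their values, with the discriminants and the joint invariant as coefficients. -/
theorem jacobian_sq (b₀ b₁ b₂ d₀ d₁ d₂ u₀ u₁ : ℂ) :
    ((u₀ * d₁ / 2 - u₁ * d₀) * (b₁ * u₁ / 2 - b₂ * u₀)
        - (u₀ * d₂ - u₁ * d₁ / 2) * (b₀ * u₁ - b₁ * u₀ / 2)) ^ 2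
      = -((b₀ * b₂ - b₁ ^ 2 / 4) * (d₀ * u₁ ^ 2 - d₁ * u₀ * u₁ + d₂ * u₀ ^ 2) ^ 2
        - (b₀ * d₂ - b₁ * d₁ / 2 + b₂ * d₀) * (b₀ * u₁ ^ 2 - b₁ * u₀ * u₁ + b₂ * u₀ ^ 2)
          * (d₀ * u₁ ^ 2 - d₁ * u₀ * u₁ + d₂ * u₀ ^ 2)
        + (d₀ * d₂ - d₁ ^ 2 / 4) * (b₀ * u₁ ^ 2 - b₁ * u₀ * u₁ + b₂ * u₀ ^ 2) ^ 2) := by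
  ring

/-- For a cubic `c` and a quadratic `b`, the value of the Hessian of `c` at the root of the
linear covariant `(c, b)₂` is a polynomial in the three invariants `J`, `K`, `L`. -/
theorem hessian_at_root (b₀ b₁ b₂ c₀ c₁ c₂ c₃ d₀ d₁ d₂ u₀ u₁ J K L : ℂ)
    (hd₀ : d₀ = 2 * (c₀ * c₂ - c₁ ^ 2)) (hd₁ : d₁ = 2 * (c₀ * c₃ - c₁ * c₂))
    (hd₂ : d₂ = 2 * (c₁ * c₃ - c₂ ^ 2))
    (hu₀ : u₀ = c₀ * b₂ - c₁ * b₁ + c₂ * b₀) (hu₁ : u₁ = c₁ * b₂ - c₂ * b₁ + c₃ * b₀)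
    (hJ : J = -(1 / 2) * (b₀ * b₂ - b₁ * b₁ / 2 + b₂ * b₀))
    (hK : K = 1 / 8 * (b₀ * d₂ - b₁ * d₁ / 2 + b₂ * d₀))
    (hL : L = 1 / 96 * (d₀ * d₂ - d₁ * d₁ / 2 + d₂ * d₀)) :
    d₀ * u₁ ^ 2 - d₁ * u₀ * u₁ + d₂ * u₀ ^ 2 = -96 * L * J - 32 * K ^ 2 := by
  subst hJ hK hL hu₀ hu₁ hd₀ hd₁ hd₂
  ring

/-- The value of `C₁` at the root of `C₄`. This is the one place where the quadratic `b` and the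
cubic `c` must come from a common quintic; for an independent pair the value is a further
joint invariant. -/
theorem cov1_at_root (A₀ A₁ A₂ A₃ A₄ A₅ b₀ b₁ b₂ c₀ c₁ c₂ c₃ d₀ d₁ d₂ u₀ u₁ J K L : ℂ)
    (hb₀ : b₀ = 2 * (A₀ * A₄ - 4 * A₁ * A₃ + 3 * A₂ ^ 2))
    (hb₁ : b₁ = 2 * (A₀ * A₅ - 3 * A₁ * A₄ + 2 * A₂ * A₃))
    (hb₂ : b₂ = 2 * (A₁ * A₅ - 4 * A₂ * A₄ + 3 * A₃ ^ 2))
    (hc₀ : c₀ = A₀ * b₂ - A₁ * b₁ + A₂ * b₀) (hc₁ : c₁ = A₁ * b₂ - A₂ * b₁ + A₃ * b₀)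
    (hc₂ : c₂ = A₂ * b₂ - A₃ * b₁ + A₄ * b₀) (hc₃ : c₃ = A₃ * b₂ - A₄ * b₁ + A₅ * b₀)
    (hd₀ : d₀ = 2 * (c₀ * c₂ - c₁ ^ 2)) (hd₁ : d₁ = 2 * (c₀ * c₃ - c₁ * c₂))
    (hd₂ : d₂ = 2 * (c₁ * c₃ - c₂ ^ 2))
    (hu₀ : u₀ = c₀ * b₂ - c₁ * b₁ + c₂ * b₀) (hu₁ : u₁ = c₁ * b₂ - c₂ * b₁ + c₃ * b₀)
    (hJ : J = -(1 / 2) * (b₀ * b₂ - b₁ * b₁ / 2 + b₂ * b₀))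
    (hK : K = 1 / 8 * (b₀ * d₂ - b₁ * d₁ / 2 + b₂ * d₀))
    (hL : L = 1 / 96 * (d₀ * d₂ - d₁ * d₁ / 2 + d₂ * d₀)) :
    b₀ * u₁ ^ 2 - b₁ * u₀ * u₁ + b₂ * u₀ ^ 2 = -288 * L - 32 * J * K := by
  subst hJ hK hL hu₀ hu₁ hd₀ hd₁ hd₂ hc₀ hc₁ hc₂ hc₃ hb₀ hb₁ hb₂
  ring

/-- The unique relation `16H² = −432L³ − 72L²KJ + 8LK³ − 2LK²J² + L²J³ + K⁴J`
among the fundamental invariants of the binary quintic. -/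
theorem quintic_invariant_relation (a : Fin 6 → ℂ) :
    16 * Hinv (formOf a) ^ 2 =
      -432 * Linv (formOf a) ^ 3
        - 72 * Linv (formOf a) ^ 2 * Kinv (formOf a) * Jinv (formOf a)
        + 8 * Linv (formOf a) * Kinv (formOf a) ^ 3
        - 2 * Linv (formOf a) * Kinv (formOf a) ^ 2 * Jinv (formOf a) ^ 2
        + Linv (formOf a) ^ 2 * Jinv (formOf a) ^ 3
        + Kinv (formOf a) ^ 4 * Jinv (formOf a) := by
  rw [formOf_eq]
  generalize a 0 = A₀, a 1 / 5 = A₁, a 2 / 10 = A₂, a 3 / 10 = A₃, a 4 / 5 = A₄, a 5 = A₅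
  simp only [Jinv, Kinv, Linv, Hinv, cov4, cov3, cov2, cov1, transv_554]
  generalize hb₀ : 2 * (A₀ * A₄ - 4 * A₁ * A₃ + 3 * A₂ ^ 2) = b₀,
    hb₁ : 2 * (A₀ * A₅ - 3 * A₁ * A₄ + 2 * A₂ * A₃) = b₁,
    hb₂ : 2 * (A₁ * A₅ - 4 * A₂ * A₄ + 3 * A₃ ^ 2) = b₂
  simp only [transv_522]
  generalize hc₀ : A₀ * b₂ - A₁ * b₁ + A₂ * b₀ = c₀, hc₁ : A₁ * b₂ - A₂ * b₁ + A₃ * b₀ = c₁,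
    hc₂ : A₂ * b₂ - A₃ * b₁ + A₄ * b₀ = c₂, hc₃ : A₃ * b₂ - A₄ * b₁ + A₅ * b₀ = c₃
  simp only [transv_332, transv_322]
  generalize hd₀ : 2 * (c₀ * c₂ - c₁ ^ 2) = d₀, hd₁ : 2 * (c₀ * c₃ - c₁ * c₂) = d₁,
    hd₂ : 2 * (c₁ * c₃ - c₂ ^ 2) = d₂,
    hu₀ : c₀ * b₂ - c₁ * b₁ + c₂ * b₀ = u₀, hu₁ : c₁ * b₂ - c₂ * b₁ + c₃ * b₀ = u₁
  simp only [transv_222, transv_121, transv_211, transv_111, constantCoeff_C]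
  have hH := jacobian_sq b₀ b₁ b₂ d₀ d₁ d₂ u₀ u₁
  have hN := hessian_at_root b₀ b₁ b₂ c₀ c₁ c₂ c₃ d₀ d₁ d₂ u₀ u₁ _ _ _
    hd₀.symm hd₁.symm hd₂.symm hu₀.symm hu₁.symm rfl rfl rfl
  have hM := cov1_at_root A₀ A₁ A₂ A₃ A₄ A₅ b₀ b₁ b₂ c₀ c₁ c₂ c₃ d₀ d₁ d₂ u₀ u₁ _ _ _
    hb₀.symm hb₁.symm hb₂.symm hc₀.symm hc₁.symm hc₂.symm hc₃.symm
    hd₀.symm hd₁.symm hd₂.symm hu₀.symm hu₁.symm rfl rfl rfl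
  rw [hM, hN] at hH
  rw [mul_pow, hH]
  ring

end
end

section
/- For every binary quintic F over ℂ written as F(x) = (xλ₁)(xλ₂)(xλ₃)(xλ₄)(xλ₅), one has Disc(F) = 5⁵·(J(F)² − 128·K(F)). -/
/-!
The statement is reduced to polynomial identities in coefficients.

Binary forms of order at most five are written with binomially normalised coefficients
(`bin1`, …, `bin5`). Differentiating such a form shifts its coefficients, so each transvectant
occurring in `J` and `K` has a short closed form (`transv_quintic_quintic`,
`transv_quintic_quadratic`, `transv_cubic_cubic`, `transv_quadratic_quadratic`). Hence
`5⁵(J² − 128K)` is an explicit polynomial `quinticDisc` in the coefficients (`invariants_bin5`).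

The product `∏ (λᵢλⱼ)²` is then built up one root at a time: if `F = (xλ)Q`, then
`Disc(F) = Disc(Q) · Q(λ)²`. For the coefficient discriminants of the quintic, the quartic and the
cubic this is a polynomial identity in the coefficients of `Q` and the coordinates of `λ`
(`quinticDisc_mul`, `quarticDisc_mul`, `cubicDisc_mul`), which is checked by normalisation; the
value `Q(λ)` is a product of brackets.
-/


noncomputable section

open MvPolynomial

/-! ### Forms with normalised coefficients and their transvectants -/

/-- The linear form with coefficients `a, b`. -/
def bin1 (a b : ℂ) : P2 := C a * X 0 + C b * X 1

/-- The quadratic form with binomially normalised coefficients `a, b, c`. -/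
def bin2 (a b c : ℂ) : P2 := C a * X 0 ^ 2 + C (2 * b) * X 0 * X 1 + C c * X 1 ^ 2

/-- The cubic form with binomially normalised coefficients `a, b, c, d`. -/
def bin3 (a b c d : ℂ) : P2 :=
  C a * X 0 ^ 3 + C (3 * b) * X 0 ^ 2 * X 1 + C (3 * c) * X 0 * X 1 ^ 2 + C d * X 1 ^ 3

/-- The quartic form with binomially normalised coefficients `a, b, c, d, e`. -/
def bin4 (a b c d e : ℂ) : P2 :=
  C a * X 0 ^ 4 + C (4 * b) * X 0 ^ 3 * X 1 + C (6 * c) * X 0 ^ 2 * X 1 ^ 2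
    + C (4 * d) * X 0 * X 1 ^ 3 + C e * X 1 ^ 4

/-- The quintic form with binomially normalised coefficients `a, b, c, d, e, f`. -/
def bin5 (a b c d e f : ℂ) : P2 :=
  C a * X 0 ^ 5 + C (5 * b) * X 0 ^ 4 * X 1 + C (10 * c) * X 0 ^ 3 * X 1 ^ 2
    + C (10 * d) * X 0 ^ 2 * X 1 ^ 3 + C (5 * e) * X 0 * X 1 ^ 4 + C f * X 1 ^ 5

lemma pd_zero_bin1 (a b : ℂ) : pd 0 (bin1 a b) = C a := by
  simp [pd, bin1, pderiv_X]

lemma pd_one_bin1 (a b : ℂ) : pd 1 (bin1 a b) = C b := by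
  simp [pd, bin1, pderiv_X]

lemma pd_zero_bin2 (a b c : ℂ) : pd 0 (bin2 a b c) = bin1 (2 * a) (2 * b) := by
  apply MvPolynomial.funext; intro x
  simp [pd, bin2, bin1, pderiv_X]; ring

lemma pd_one_bin2 (a b c : ℂ) : pd 1 (bin2 a b c) = bin1 (2 * b) (2 * c) := by
  apply MvPolynomial.funext; intro x
  simp [pd, bin2, bin1, pderiv_X]; ring

lemma pd_zero_bin3 (a b c d : ℂ) :
    pd 0 (bin3 a b c d) = bin2 (3 * a) (3 * b) (3 * c) := by
  apply MvPolynomial.funext; intro x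
  simp [pd, bin3, bin2, pderiv_X]; ring

lemma pd_one_bin3 (a b c d : ℂ) :
    pd 1 (bin3 a b c d) = bin2 (3 * b) (3 * c) (3 * d) := by
  apply MvPolynomial.funext; intro x
  simp [pd, bin3, bin2, pderiv_X]; ring

lemma pd_zero_bin4 (a b c d e : ℂ) :
    pd 0 (bin4 a b c d e) = bin3 (4 * a) (4 * b) (4 * c) (4 * d) := by
  apply MvPolynomial.funext; intro x
  simp [pd, bin4, bin3, pderiv_X]; ring

lemma pd_one_bin4 (a b c d e : ℂ) :
    pd 1 (bin4 a b c d e) = bin3 (4 * b) (4 * c) (4 * d) (4 * e) := by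
  apply MvPolynomial.funext; intro x
  simp [pd, bin4, bin3, pderiv_X]; ring

lemma pd_zero_bin5 (a b c d e f : ℂ) :
    pd 0 (bin5 a b c d e f) = bin4 (5 * a) (5 * b) (5 * c) (5 * d) (5 * e) := by
  apply MvPolynomial.funext; intro x
  simp [pd, bin5, bin4, pderiv_X]; ring

lemma pd_one_bin5 (a b c d e f : ℂ) :
    pd 1 (bin5 a b c d e f) = bin4 (5 * b) (5 * c) (5 * d) (5 * e) (5 * f) := by
  apply MvPolynomial.funext; intro x
  simp [pd, bin5, bin4, pderiv_X]; ring

lemma transv_quintic_quintic (a b c d e f : ℂ) :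
    transv 5 5 4 (bin5 a b c d e f) (bin5 a b c d e f) =
      bin2 (2 * (a * e - 4 * b * d + 3 * c ^ 2)) (a * f - 3 * b * e + 2 * c * d)
        (2 * (b * f - 4 * c * e + 3 * d ^ 2)) := by
  simp only [transv, Finset.sum_range_succ, Finset.sum_range_zero, Function.iterate_succ,
    Function.iterate_zero, Function.comp_apply, id, pd_zero_bin5, pd_one_bin5, pd_zero_bin4,
    pd_one_bin4, pd_zero_bin3, pd_one_bin3, pd_zero_bin2, pd_one_bin2, Nat.reduceSub]
  apply MvPolynomial.funext; intro x
  simp [bin1, bin2, Nat.factorial, Nat.choose]; ring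

lemma transv_quintic_quadratic (a b c d e f p q r : ℂ) :
    transv 5 2 2 (bin5 a b c d e f) (bin2 p q r) =
      bin3 (a * r - 2 * b * q + c * p) (b * r - 2 * c * q + d * p)
        (c * r - 2 * d * q + e * p) (d * r - 2 * e * q + f * p) := by
  simp only [transv, Finset.sum_range_succ, Finset.sum_range_zero, Function.iterate_succ,
    Function.iterate_zero, Function.comp_apply, id, pd_zero_bin5, pd_one_bin5, pd_zero_bin4,
    pd_one_bin4, pd_zero_bin2, pd_one_bin2, pd_zero_bin1, pd_one_bin1, Nat.reduceSub]
  apply MvPolynomial.funext; intro x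
  simp [bin3, Nat.factorial, Nat.choose]; ring

lemma transv_cubic_cubic (a b c d : ℂ) :
    transv 3 3 2 (bin3 a b c d) (bin3 a b c d) =
      bin2 (2 * (a * c - b ^ 2)) (a * d - b * c) (2 * (b * d - c ^ 2)) := by
  simp only [transv, Finset.sum_range_succ, Finset.sum_range_zero, Function.iterate_succ,
    Function.iterate_zero, Function.comp_apply, id, pd_zero_bin3, pd_one_bin3, pd_zero_bin2,
    pd_one_bin2, Nat.reduceSub]
  apply MvPolynomial.funext; intro x
  simp [bin1, bin2, Nat.factorial, Nat.choose]; ring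

lemma transv_quadratic_quadratic (a b c p q r : ℂ) :
    transv 2 2 2 (bin2 a b c) (bin2 p q r) = C (a * r - 2 * b * q + c * p) := by
  simp only [transv, Finset.sum_range_succ, Finset.sum_range_zero, Function.iterate_succ,
    Function.iterate_zero, Function.comp_apply, id, pd_zero_bin2, pd_one_bin2, pd_zero_bin1,
    pd_one_bin1, Nat.reduceSub]
  apply MvPolynomial.funext; intro x
  simp [Nat.factorial, Nat.choose]; ring

/-! ### Coefficient formulas for the discriminants -/

/-- The discriminant of `bin5 a b c d e f`, assembled from the normalised coefficients `p, q, r`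
of `C₁`, the coefficients `s, t, u, v` of `C₂`, and from `C₃`. -/
def quinticDisc (a b c d e f : ℂ) : ℂ :=
  let p := 2 * (a * e - 4 * b * d + 3 * c ^ 2)
  let q := a * f - 3 * b * e + 2 * c * d
  let r := 2 * (b * f - 4 * c * e + 3 * d ^ 2)
  let s := a * r - 2 * b * q + c * p
  let t := b * r - 2 * c * q + d * p
  let u := c * r - 2 * d * q + e * p
  let v := d * r - 2 * e * q + f * p
  5 ^ 5 * ((q ^ 2 - p * r) ^ 2
    - 32 * (p * (t * v - u ^ 2) - q * (s * v - t * u) + r * (s * u - t ^ 2)))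

lemma invariants_bin5 (a b c d e f : ℂ) :
    5 ^ 5 * (Jinv (bin5 a b c d e f) ^ 2 - 128 * Kinv (bin5 a b c d e f)) =
      quinticDisc a b c d e f := by
  simp only [Jinv, Kinv, cov3, cov2, cov1, transv_quintic_quintic, transv_quintic_quadratic,
    transv_cubic_cubic, transv_quadratic_quadratic, constantCoeff_C, quinticDisc]
  ring

/-- The discriminant of the quartic with unnormalised coefficients `a, b, c, d, e`. -/
def quarticDisc (a b c d e : ℂ) : ℂ :=
  (4 * (12 * a * e - 3 * b * d + c ^ 2) ^ 3
    - (72 * a * c * e + 9 * b * c * d - 27 * a * d ^ 2 - 27 * e * b ^ 2 - 2 * c ^ 3) ^ 2) / 27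

/-- The discriminant of the cubic with unnormalised coefficients `a, b, c, d`. -/
def cubicDisc (a b c d : ℂ) : ℂ :=
  b ^ 2 * c ^ 2 - 4 * a * c ^ 3 - 4 * b ^ 3 * d - 27 * a ^ 2 * d ^ 2 + 18 * a * b * c * d

/-- `Disc((xλ)Q) = Disc(Q) Q(λ)²` for a quartic `Q`, with `λ = (m, n)`. The divisions normalise
the coefficients of the product. -/
lemma quinticDisc_mul (a b c d e m n : ℂ) :
    quinticDisc (n * a) ((n * b - m * a) / 5) ((n * c - m * b) / 10) ((n * d - m * c) / 10)
        ((n * e - m * d) / 5) (-(m * e)) =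
      quarticDisc a b c d e *
        (a * m ^ 4 + b * m ^ 3 * n + c * m ^ 2 * n ^ 2 + d * m * n ^ 3 + e * n ^ 4) ^ 2 := by
  simp only [quinticDisc, quarticDisc]
  ring

lemma quarticDisc_mul (a b c d m n : ℂ) :
    quarticDisc (n * a) (n * b - m * a) (n * c - m * b) (n * d - m * c) (-(m * d)) =
      cubicDisc a b c d * (a * m ^ 3 + b * m ^ 2 * n + c * m * n ^ 2 + d * n ^ 3) ^ 2 := by
  simp only [quarticDisc, cubicDisc]
  ring

lemma cubicDisc_mul (a b c m n : ℂ) :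
    cubicDisc (n * a) (n * b - m * a) (n * c - m * b) (-(m * c)) =
      (b ^ 2 - 4 * a * c) * (a * m ^ 2 + b * m * n + c * n ^ 2) ^ 2 := by
  simp only [cubicDisc]
  ring


/-- `Disc(F) = 5⁵(J² − 128K)` for a binary quintic `F`. -/
theorem quintic_disc_formula (l : Fin 5 → Fin 2 → ℂ) :
    disc5 l = 5 ^ 5 * (Jinv (quinticOf l) ^ 2 - 128 * Kinv (quinticOf l)) := by
  -- `q`, `c`, `k` are the coefficients of the products of the first two, three and four factors.
  obtain ⟨q0, hq0⟩ : ∃ z, z = l 1 1 * l 0 1 := ⟨_, rfl⟩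
  obtain ⟨q1, hq1⟩ : ∃ z, z = -(l 1 1 * l 0 0) - l 1 0 * l 0 1 := ⟨_, rfl⟩
  obtain ⟨q2, hq2⟩ : ∃ z, z = l 1 0 * l 0 0 := ⟨_, rfl⟩
  obtain ⟨c0, hc0⟩ : ∃ z, z = l 2 1 * q0 := ⟨_, rfl⟩
  obtain ⟨c1, hc1⟩ : ∃ z, z = l 2 1 * q1 - l 2 0 * q0 := ⟨_, rfl⟩
  obtain ⟨c2, hc2⟩ : ∃ z, z = l 2 1 * q2 - l 2 0 * q1 := ⟨_, rfl⟩
  obtain ⟨c3, hc3⟩ : ∃ z, z = -(l 2 0 * q2) := ⟨_, rfl⟩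
  obtain ⟨k0, hk0⟩ : ∃ z, z = l 3 1 * c0 := ⟨_, rfl⟩
  obtain ⟨k1, hk1⟩ : ∃ z, z = l 3 1 * c1 - l 3 0 * c0 := ⟨_, rfl⟩
  obtain ⟨k2, hk2⟩ : ∃ z, z = l 3 1 * c2 - l 3 0 * c1 := ⟨_, rfl⟩
  obtain ⟨k3, hk3⟩ : ∃ z, z = l 3 1 * c3 - l 3 0 * c2 := ⟨_, rfl⟩
  obtain ⟨k4, hk4⟩ : ∃ z, z = -(l 3 0 * c3) := ⟨_, rfl⟩
  have hF : quinticOf l = bin5 (l 4 1 * k0) ((l 4 1 * k1 - l 4 0 * k0) / 5)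
      ((l 4 1 * k2 - l 4 0 * k1) / 10) ((l 4 1 * k3 - l 4 0 * k2) / 10)
      ((l 4 1 * k4 - l 4 0 * k3) / 5) (-(l 4 0 * k4)) := by
    apply MvPolynomial.funext; intro x
    simp only [quinticOf, Fin.prod_univ_five, lin, bin5, map_mul, map_add, map_sub, map_pow,
      eval_C, eval_X, hk0, hk1, hk2, hk3, hk4, hc0, hc1, hc2, hc3, hq0, hq1, hq2]
    ring
  have hK : k0 * l 4 0 ^ 4 + k1 * l 4 0 ^ 3 * l 4 1 + k2 * l 4 0 ^ 2 * l 4 1 ^ 2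
      + k3 * l 4 0 * l 4 1 ^ 3 + k4 * l 4 1 ^ 4 =
      br (l 0) (l 4) * br (l 1) (l 4) * br (l 2) (l 4) * br (l 3) (l 4) := by
    simp only [br, hk0, hk1, hk2, hk3, hk4, hc0, hc1, hc2, hc3, hq0, hq1, hq2]
    ring
  have hC : c0 * l 3 0 ^ 3 + c1 * l 3 0 ^ 2 * l 3 1 + c2 * l 3 0 * l 3 1 ^ 2
      + c3 * l 3 1 ^ 3 = -(br (l 0) (l 3) * br (l 1) (l 3) * br (l 2) (l 3)) := by
    simp only [br, hc0, hc1, hc2, hc3, hq0, hq1, hq2]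
    ring
  have hQ : q0 * l 2 0 ^ 2 + q1 * l 2 0 * l 2 1 + q2 * l 2 1 ^ 2 =
      br (l 0) (l 2) * br (l 1) (l 2) := by
    simp only [br, hq0, hq1, hq2]
    ring
  have hB : q1 ^ 2 - 4 * q0 * q2 = br (l 0) (l 1) ^ 2 := by
    simp only [br, hq0, hq1, hq2]
    ring
  have hD : disc5 l = br (l 0) (l 1) ^ 2 * (br (l 0) (l 2) * br (l 1) (l 2)) ^ 2
      * (br (l 0) (l 3) * br (l 1) (l 3) * br (l 2) (l 3)) ^ 2
      * (br (l 0) (l 4) * br (l 1) (l 4) * br (l 2) (l 4) * br (l 3) (l 4)) ^ 2 := by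
    have h0 : Finset.Ioi (0 : Fin 5) = {1, 2, 3, 4} := by decide
    have h1 : Finset.Ioi (1 : Fin 5) = {2, 3, 4} := by decide
    have h2 : Finset.Ioi (2 : Fin 5) = {3, 4} := by decide
    have h3 : Finset.Ioi (3 : Fin 5) = {4} := by decide
    have h4 : Finset.Ioi (4 : Fin 5) = ∅ := by decide
    simp only [disc5, Fin.prod_univ_five, h0, h1, h2, h3, h4]
    simp
    ring
  rw [hF, invariants_bin5, quinticDisc_mul, hK, hk0, hk1, hk2, hk3, hk4, quarticDisc_mul, hC,
    hc0, hc1, hc2, hc3, cubicDisc_mul, hQ, hB, hD]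
  ring

end
end

section
/- For the binary quintic in Sylvester canonical form F(x₁,x₂) = u·x₁⁵ + v·x₂⁵ − w·(x₁+x₂)⁵ with u, v, w ∈ ℂ, one has J(F) = (uv + uw + vw)² − 4uvw(u + v + w). -/
/-!
The transvectant of two fifth powers of linear forms is `(l⁵, m⁵)₄ = [l m]⁴ l m`, with `[l m]` the
determinant of the pair.  By bilinearity, for `F = u x₁⁵ + v x₂⁵ − w (x₁+x₂)⁵`, all three pairwise
determinants being `±1`,
`C₁ = 2 (uv x₁x₂ − uw x₁(x₁+x₂) − vw x₂(x₁+x₂))`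
(`cov1_sylvester`, obtained here from the explicit fourth derivatives of `F`).  For a quadratic form
`a x₁² + b x₁x₂ + c x₂²` one has `−½ (Q,Q)₂ = b²/4 − ac` (`transv_quadratic`), and substituting the
coefficients of `C₁` gives `(uv − uw − vw)² − 4uvw²`, which is the claimed expression.
-/

noncomputable section

open MvPolynomial

lemma pd_zero_three_powers (a b c : ℂ) (n : ℕ) :
    pd 0 (C a * X 0 ^ (n + 1) + C b * X 1 ^ (n + 1) - C c * (X 0 + X 1) ^ (n + 1))
      = C ((n + 1) * a) * X 0 ^ n + C 0 * X 1 ^ n - C ((n + 1) * c) * (X 0 + X 1) ^ n := by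
  simp [pd, pderiv_X]
  ring

lemma pd_one_three_powers (a b c : ℂ) (n : ℕ) :
    pd 1 (C a * X 0 ^ (n + 1) + C b * X 1 ^ (n + 1) - C c * (X 0 + X 1) ^ (n + 1))
      = C 0 * X 0 ^ n + C ((n + 1) * b) * X 1 ^ n - C ((n + 1) * c) * (X 0 + X 1) ^ n := by
  simp [pd, pderiv_X]
  ring

lemma cov1_sylvester (u v w : ℂ) :
    cov1 (sylvester u v w)
      = C (-2 * u * w) * X 0 ^ 2 + C (2 * (u * v - u * w - v * w)) * (X 0 * X 1)
        + C (-2 * v * w) * X 1 ^ 2 := by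
  have h1 := fun a b c => pd_zero_three_powers a b c 1
  have h2 := fun a b c => pd_zero_three_powers a b c 2
  have h3 := fun a b c => pd_zero_three_powers a b c 3
  have h4 := fun a b c => pd_zero_three_powers a b c 4
  have k1 := fun a b c => pd_one_three_powers a b c 1
  have k2 := fun a b c => pd_one_three_powers a b c 2
  have k3 := fun a b c => pd_one_three_powers a b c 3
  have k4 := fun a b c => pd_one_three_powers a b c 4
  norm_num only [Nat.cast_ofNat, Nat.cast_one] at h1 h2 h3 h4 k1 k2 k3 k4
  simp only [cov1, transv, sylvester, Finset.sum_range_succ, Finset.sum_range_zero,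
    Function.iterate_succ, Function.iterate_zero, Function.comp, id, Nat.reduceSub,
    h1, h2, h3, h4, k1, k2, k3, k4]
  apply MvPolynomial.funext
  intro x
  simp [Nat.factorial, Nat.choose]
  ring

lemma transv_quadratic (a b c : ℂ) :
    constantCoeff (transv 2 2 2 (C a * X 0 ^ 2 + C b * (X 0 * X 1) + C c * X 1 ^ 2)
      (C a * X 0 ^ 2 + C b * (X 0 * X 1) + C c * X 1 ^ 2)) = 2 * a * c - b ^ 2 / 2 := by
  have h : constantCoeff (2 : P2) = 2 := map_ofNat _ 2
  simp [transv, pd, Finset.sum_range_succ, pderiv_X, Nat.factorial, Nat.choose, h]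
  ring

/-- `J = (uv + uw + vw)² − 4uvw(u + v + w)` on the Sylvester canonical form. -/
theorem jinv_sylvester (u v w : ℂ) :
    Jinv (sylvester u v w)
      = (u * v + u * w + v * w) ^ 2 - 4 * u * v * w * (u + v + w) := by
  rw [Jinv, cov1_sylvester, transv_quadratic]
  ring

end
end
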